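/- Let G be a group with generating set X such that the Cayley graph Γ(G,X) is hyperbolic, and let H_1,…,H_l be subgroups of G of infinite index, each hyperbolically embedded in (G,X), with at least one H_j infinite (so that G is acylindrically hyperbolic), and suppose G has a finite normal subgroup containing every finite normal subgroup of G. Then there exists a homogeneous quasimorphism q : G → ℝ which is not a group homomorphism and which vanishes identically on each H_i. (Equivalently, the product of the restriction maps EH²_b(G,ℝ) → ∏_{i=1}^l EH²_b(H_i,ℝ) on exact bounded cohomology is not injective.) -/

import Mathlib

open Pointwise

section BasicDefs

variable {G : Type*} [Group G]

/-- The word length of `g` with respect to the generating set `S`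
(words use letters from `S ∪ S⁻¹`). -/
noncomputable def wordLength (S : Set G) (g : G) : ℕ :=
  sInf {n : ℕ | ∃ l : List G, l.length = n ∧ (∀ x ∈ l, x ∈ S ∨ x⁻¹ ∈ S) ∧ l.prod = g}

/-- The word metric on `G` with respect to the generating set `S`. -/
noncomputable def wordDist (S : Set G) (g h : G) : ℝ :=
  (wordLength S (g⁻¹ * h) : ℝ)

/-- The closed `r`-neighborhood of a subset `A` with respect to the word metric `d_S`. -/
def nbhd (S : Set G) (r : ℝ) (A : Set G) : Set G :=
  {g : G | ∃ a ∈ A, wordDist S g a ≤ r}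

/-- The distance between two subsets: the infimum of distances between their elements. -/
noncomputable def setDist (S : Set G) (A B : Set G) : ℝ :=
  sInf {r : ℝ | ∃ a ∈ A, ∃ b ∈ B, r = wordDist S a b}

/-- The conjugate subgroup `H^g = g H g⁻¹`. -/
def conjSub (g : G) (H : Subgroup G) : Subgroup G :=
  H.map (MulAut.conj g).toMonoidHom

end BasicDefs

/-- `γ` restricted to `{0, …, n}` is a `(K, ε)`-quasigeodesic for the distance function `d`. -/
def IsQuasigeodesic {α : Type*} (d : α → α → ℝ) (K ε : ℝ) (n : ℕ) (γ : ℕ → α) : Prop :=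
  ∀ i j : ℕ, i ≤ n → j ≤ n →
    (1 / K) * |(i : ℝ) - (j : ℝ)| - ε ≤ d (γ i) (γ j) ∧
      d (γ i) (γ j) ≤ K * |(i : ℝ) - (j : ℝ)| + ε

/-- `γ` restricted to `{0, …, n}` is a geodesic for the distance function `d`. -/
def IsGeodesic {α : Type*} (d : α → α → ℝ) (n : ℕ) (γ : ℕ → α) : Prop :=
  ∀ i j : ℕ, i ≤ n → j ≤ n → d (γ i) (γ j) = |(i : ℝ) - (j : ℝ)|

/-- The path `γ` (on `{0, …, n}`) is `f`-stable: every `(K, ε)`-quasigeodesic with endpoints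
on `γ` stays in the `f K ε`-neighborhood of `γ`. -/
def IsStablePath {α : Type*} (d : α → α → ℝ) (f : ℝ → ℝ → ℝ) (n : ℕ) (γ : ℕ → α) : Prop :=
  ∀ K ε : ℝ, 1 ≤ K → 0 ≤ ε → ∀ (m : ℕ) (η : ℕ → α),
    IsQuasigeodesic d K ε m η →
    (∃ i ≤ n, η 0 = γ i) → (∃ i ≤ n, η m = γ i) →
    ∀ j ≤ m, ∃ i ≤ n, d (η j) (γ i) ≤ f K ε

/-- The Gromov product `⟨x, y⟩_w` with respect to a distance function `d`. -/
noncomputable def gromovProd {α : Type*} (d : α → α → ℝ) (w x y : α) : ℝ :=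
  (d w x + d w y - d x y) / 2

/-- Gromov hyperbolicity of a distance function, via the four-point condition. -/
def IsHyperbolicDist {α : Type*} (d : α → α → ℝ) : Prop :=
  ∃ δ : ℝ, 0 ≤ δ ∧ ∀ w x y z : α,
    min (gromovProd d w x y) (gromovProd d w y z) - δ ≤ gromovProd d w x z

section GroupDefs

variable {G : Type*} [Group G]

/-- `H` is a stable subgroup of `(G, d_S)` with stability function `f`: `H` has a finite
generating set `T` such that the inclusion `(H, d_T) → (G, d_S)` is a quasi-isometric
embedding sending every `d_T`-geodesic to an `f`-stable quasigeodesic of `(G, d_S)`. -/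
def IsStableSubgroupWith (S : Set G) (H : Subgroup G) (f : ℝ → ℝ → ℝ) : Prop :=
  ∃ T : Set H, T.Finite ∧ Subgroup.closure T = ⊤ ∧
    (∃ μ c : ℝ, 1 ≤ μ ∧ 0 ≤ c ∧ ∀ h₁ h₂ : H,
      (1 / μ) * wordDist T h₁ h₂ - c ≤ wordDist S (h₁ : G) (h₂ : G) ∧
        wordDist S (h₁ : G) (h₂ : G) ≤ μ * wordDist T h₁ h₂ + c) ∧
    ∀ (n : ℕ) (γ : ℕ → H), IsGeodesic (wordDist T) n γ →
      (∃ K ε : ℝ, 1 ≤ K ∧ 0 ≤ ε ∧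
        IsQuasigeodesic (wordDist S) K ε n (fun i => (γ i : G))) ∧
      IsStablePath (wordDist S) f n (fun i => (γ i : G))

/-- `H` is a stable subgroup of `(G, d_S)`. -/
def IsStableSubgroup (S : Set G) (H : Subgroup G) : Prop :=
  ∃ f : ℝ → ℝ → ℝ, IsStableSubgroupWith S H f

/-- The family `Q` of subgroups is hyperbolically embedded in `(G, X)`:
(Q1) geometric separation, (Q2) finite generation, (Q3) uniform quasi-isometric embedding. -/
def IsHypEmbFamily {G : Type*} [Group G] {ι : Type*} (X : Set G) (Q : ι → Subgroup G) : Prop :=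
  (∀ ε : ℝ, 0 < ε → ∃ R : ℝ, ∀ (g : G) (i j : ι),
      (∃ a ∈ (Q i : Set G) ∩ nbhd X ε (g • (Q j : Set G)),
        ∃ b ∈ (Q i : Set G) ∩ nbhd X ε (g • (Q j : Set G)), R ≤ wordDist X a b) →
      i = j ∧ g ∈ Q i) ∧
  ∃ Y : ι → Set G, (∀ i, (Y i).Finite ∧ Y i ⊆ (Q i : Set G) ∧ Subgroup.closure (Y i) = Q i) ∧
    ∃ μ c : ℝ, 1 ≤ μ ∧ 0 ≤ c ∧ ∀ i : ι, ∀ h ∈ Q i,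
      (wordLength (Y i) h : ℝ) ≤ μ * (wordLength X h : ℝ) + c

/-- The subset `H` of `G` satisfies the WPD condition in `(G, X)`. -/
def WPDSet (X : Set G) (H : Set G) : Prop :=
  ∀ ε : ℝ, 0 < ε → ∃ N : ℝ, 0 < N ∧ ∀ h₁ h₂ : G, h₁ ∈ H → h₂ ∈ H →
    N < wordDist X h₁ h₂ →
    {g : G | wordDist X h₁ (g * h₁) < ε ∧ wordDist X h₂ (g * h₂) < ε}.Finite

/-- A quasimorphism on `G`. -/
def IsQuasimorphism (q : G → ℝ) : Prop :=
  ∃ D : ℝ, 0 ≤ D ∧ ∀ x y : G, |q (x * y) - q x - q y| ≤ D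

/-- A homogeneous quasimorphism on `G`. -/
def IsHomogeneousQM (q : G → ℝ) : Prop :=
  IsQuasimorphism q ∧ ∀ (x : G) (n : ℕ), q (x ^ n) = (n : ℝ) * q x

/-- `H` is a quasiconvex subgroup of `(G, d_S)`: every geodesic with endpoints in `H`
lies in a uniformly bounded neighborhood of `H`. -/
def IsQuasiconvex (S : Set G) (H : Subgroup G) : Prop :=
  ∃ C : ℝ, 0 ≤ C ∧ ∀ (n : ℕ) (γ : ℕ → G), IsGeodesic (wordDist S) n γ →
    γ 0 ∈ H → γ n ∈ H → ∀ i ≤ n, ∃ h ∈ H, wordDist S (γ i) h ≤ C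

end GroupDefs

/-!
Choose `H_j` infinite and maximal among the infinite `H_i` for inclusion up to conjugacy, and a
conjugate `t ∉ H_j` of an element of `H_j`. For elements `h₀, h₁, h₂` of `H_j` of rapidly growing
length, the powers of `w = h₀ t h₁ t h₂ t` run along quasigeodesics which alternate between long
segments in distinct cosets of `H_j` and jumps by `t`. The Epstein–Fujiwara construction compares
the lengths of `g` and of `g⁻¹` when translates of `w` are available at a discount; it is a
quasimorphism by hyperbolicity. A translate of `w⁻¹` cannot follow the axis of `w`, because the
coset segments, recognizable by their lengths, would occur in the reverse order. Hence the
homogenization is at most `-1` at `w`, whereas a homomorphism vanishing on `H_j`, and so at `t`,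
vanishes at `w`.

The quasimorphism vanishes on `H_i` as soon as no translate of `w` follows `H_i`. If no conjugate
of `H_i` contains `H_j`, then by B. H. Neumann's lemma `h₀` can be chosen so that already its
segment does not follow any coset of `H_i`. Otherwise maximality puts `H_i` inside a conjugate of
`H_j`, and two distinct cosets of `H_j` met by the translate of `w` would follow each other.
-/

/-! ### Hyperbolic geometry of discrete geodesic spaces -/

section Geometry

variable {α : Type*} {d : α → α → ℕ} {δ : ℕ}

/-- The point `m` lies between `x` and `y` up to an error `e`: for a metric `d` this says that the
Gromov product of `x` and `y` at `m` is at most `e / 2`. -/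
abbrev CoarselyBetween (d : α → α → ℕ) (e : ℕ) (x m y : α) : Prop :=
  d x m + d m y ≤ d x y + e

/-- A distance with values in `ℕ`, geodesic in the sense that any two points are joined by a chain
of points at consecutive distance `1`, and hyperbolic in the sense of Gromov's four-point condition
with constant `δ`. The distance between distinct points may vanish. -/
structure IsGeodesicHyperbolic (d : α → α → ℕ) (δ : ℕ) : Prop where
  dist_self : ∀ x, d x x = 0
  dist_comm : ∀ x y, d x y = d y x
  dist_triangle : ∀ x y z, d x z ≤ d x y + d y z
  exists_between : ∀ x y s, s ≤ d x y → ∃ p, d x p = s ∧ d x p + d p y = d x y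
  four_point : ∀ x y z w,
    d x z + d y w ≤ d x y + d z w + δ ∨ d x z + d y w ≤ d x w + d y z + δ

namespace IsGeodesicHyperbolic

theorem dist_triangle4 (hd : IsGeodesicHyperbolic d δ) (x y z w : α) :
    d x w ≤ d x y + d y z + d z w :=
  (hd.dist_triangle x z w).trans (by gcongr; exact hd.dist_triangle x y z)

theorem coarselyBetween_symm (hd : IsGeodesicHyperbolic d δ) {e : ℕ} {x m y : α}
    (h : CoarselyBetween d e x m y) : CoarselyBetween d e y m x := by
  grind [hd.dist_comm x m, hd.dist_comm m y, hd.dist_comm x y]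

theorem dist_le_of_coarselyBetween (hd : IsGeodesicHyperbolic d δ) {x y m p : α} {a b e : ℕ}
    (hm : CoarselyBetween d a x m y) (hp : CoarselyBetween d b x p y)
    (hmp : d x m ≤ d x p + e) (hpm : d x p ≤ d x m + e) : d m p ≤ a + b + e + δ := by
  have := hd.four_point x m y p
  have := hd.dist_comm y p
  have := hd.dist_comm y m
  have := hd.dist_comm m y
  omega

theorem dist_add_height_le (hd : IsGeodesicHyperbolic d δ) {x y u v : α} {a : ℕ}
    (hu : CoarselyBetween d a x u y) (hv : CoarselyBetween d a x v y) (huv : d x u ≤ d x v) :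
    d u v + d x u ≤ d x v + (a + δ) := by
  have := hd.dist_comm u v
  have := hd.dist_comm u y
  have := hd.dist_comm v y
  have := hd.dist_triangle x u y
  have := hd.dist_triangle x v y
  rcases hd.four_point x u y v with h | h <;> omega

theorem exists_center (hd : IsGeodesicHyperbolic d δ) (x y z : α) :
    ∃ m, CoarselyBetween d (δ + 2) x m y ∧ CoarselyBetween d (δ + 2) x m z ∧
      CoarselyBetween d (δ + 2) y m z := by
  have := hd.dist_triangle x y z
  have := hd.dist_triangle x z y
  have := hd.dist_triangle y x z
  have := hd.dist_comm y z
  have := hd.dist_comm y x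
  obtain ⟨m, hxm, hmy⟩ := hd.exists_between x y ((d x y + d x z - d y z) / 2) (by omega)
  have := hd.dist_comm m y
  have := hd.dist_comm m z
  refine ⟨m, by omega, ?_, ?_⟩ <;> rcases hd.four_point x z y m with h | h <;> omega

theorem coarselyBetween_of_long_segment (hd : IsGeodesicHyperbolic d δ) {x u v y : α} {a b : ℕ}
    (hu : CoarselyBetween d a x u v) (hv : CoarselyBetween d b u v y)
    (huv : a + b + δ < 2 * d u v) :
    CoarselyBetween d (a + δ) x u y ∧ CoarselyBetween d (b + δ) x v y ∧
      d x u + d u v + d v y ≤ d x y + a + b + δ := by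
  have := hd.four_point x u v y
  omega

section LocalToGlobal

variable {y : ℕ → α} {c : ℕ}

theorem coarselyBetween_last_of_local (hd : IsGeodesicHyperbolic d δ)
    (hlocal : ∀ k, CoarselyBetween d c (y k) (y (k + 1)) (y (k + 2)))
    (hlong : ∀ k, 2 * c + 3 * δ < 2 * d (y k) (y (k + 1))) (i j : ℕ) :
    CoarselyBetween d (c + δ) (y i) (y (i + j)) (y (i + j + 1)) := by
  induction j with
  | zero => have := hd.dist_self (y i); simp only [add_zero]; omega
  | succ j ih =>
    have := hlong (i + j)
    exact (hd.coarselyBetween_of_long_segment ih (hlocal (i + j)) (by omega)).2.1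

theorem coarselyBetween_first_of_local (hd : IsGeodesicHyperbolic d δ)
    (hlocal : ∀ k, CoarselyBetween d c (y k) (y (k + 1)) (y (k + 2)))
    (hlong : ∀ k, 2 * c + 3 * δ < 2 * d (y k) (y (k + 1))) (k j : ℕ) :
    CoarselyBetween d (c + δ) (y k) (y (k + 1)) (y (k + 1 + j)) := by
  induction j generalizing k with
  | zero => have := hd.dist_self (y (k + 1)); simp only [add_zero]; omega
  | succ j ih =>
    have : 2 * c + 3 * δ < 2 * d (y (k + 1)) (y (k + 2)) := hlong (k + 1)
    have hnext := ih (k + 1)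
    rw [show k + 1 + 1 + j = k + 1 + (j + 1) by omega] at hnext
    exact (hd.coarselyBetween_of_long_segment (hlocal k) hnext (by omega)).1

theorem coarselyBetween_of_local (hd : IsGeodesicHyperbolic d δ)
    (hlocal : ∀ k, CoarselyBetween d c (y k) (y (k + 1)) (y (k + 2)))
    (hlong : ∀ k, 2 * c + 3 * δ < 2 * d (y k) (y (k + 1))) {i k m : ℕ} (hik : i ≤ k)
    (hkm : k ≤ m) : CoarselyBetween d (c + 2 * δ) (y i) (y k) (y m) := by
  rcases hkm.eq_or_lt with rfl | hlt
  · have := hd.dist_self (y k); omega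
  · obtain ⟨j, rfl⟩ := Nat.exists_eq_add_of_le hik
    obtain ⟨j', rfl⟩ := Nat.exists_eq_add_of_le (show i + j + 1 ≤ m from hlt)
    have := hlong (i + j)
    have := (hd.coarselyBetween_of_long_segment
      (hd.coarselyBetween_last_of_local hlocal hlong i j)
      (hd.coarselyBetween_first_of_local hlocal hlong (i + j) j') (by omega)).1
    omega

end LocalToGlobal

end IsGeodesicHyperbolic

end Geometry

/-! ### Quasiconvexity of quasi-isometrically embedded subsets -/

section Morse

variable {α : Type*} {d : α → α → ℕ} {δ : ℕ}

theorem exists_forall_linear_le_two_pow_div (a b m : ℕ) :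
    ∃ N, ∀ n ≥ N, a * n + b ≤ 2 ^ (n / (m + 1)) := by
  have sq_le_two_pow (q : ℕ) (hq : 4 ≤ q) : q * q ≤ 2 ^ q := by
    induction q, hq using Nat.le_induction with
    | base => norm_num
    | succ q hq ih => rw [pow_succ]; nlinarith
  set c := 2 * (a * (m + 1)) + b + 4
  refine ⟨c * (m + 1), fun n hn => ?_⟩
  set q := n / (m + 1)
  have hcq : c ≤ q := (Nat.le_div_iff_mul_le (by omega)).2 hn
  have hq : 4 ≤ q := (Nat.le_add_left 4 _).trans hcq
  have hnq : n ≤ (q + 1) * (m + 1) := by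
    rw [add_mul, one_mul]
    exact (Nat.lt_div_mul_add (by omega)).le
  calc a * n + b ≤ a * ((q + 1) * (m + 1)) + b := by gcongr
    _ = a * (m + 1) * (q + 1) + b := by ring
    _ ≤ a * (m + 1) * (q + q) + b * q := by gcongr <;> nlinarith
    _ = (2 * (a * (m + 1)) + b) * q := by ring
    _ ≤ q * q := by gcongr; omega
    _ ≤ 2 ^ q := sq_le_two_pow q hq

namespace IsGeodesicHyperbolic

/-- A path of at most `2 ^ k` steps which avoids the open `D`-ball around `p` cannot have its
endpoints in very different directions from `p`: their Gromov product at `p` is at least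
`D - (M + k * δ) / 2`. -/
theorem two_mul_add_dist_le_of_path (hd : IsGeodesicHyperbolic d δ) {M D : ℕ} (p : α) (k : ℕ)
    (γ : ℕ → α) (n : ℕ) (hn : n ≤ 2 ^ k) (hstep : ∀ i < n, d (γ i) (γ (i + 1)) ≤ M)
    (havoid : ∀ i ≤ n, D ≤ d (γ i) p) :
    2 * D + d (γ 0) (γ n) ≤ d (γ 0) p + d p (γ n) + M + k * δ := by
  induction k generalizing γ n with
  | zero =>
    have := havoid 0 (by omega)
    have := havoid n le_rfl
    have := hd.dist_comm (γ n) p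
    obtain rfl | rfl : n = 0 ∨ n = 1 := by simpa [Nat.le_one_iff_eq_zero_or_eq_one] using hn
    · have := hd.dist_self (γ 0)
      omega
    · have : d (γ 0) (γ 1) ≤ M := hstep 0 (by omega)
      omega
  | succ k ih =>
    rw [pow_succ] at hn
    have hfirst := ih γ (n / 2) (by omega) (fun i hi => hstep i (by omega))
      (fun i hi => havoid i (by omega))
    have hsecond := ih (fun i => γ (n / 2 + i)) (n - n / 2) (by omega)
      (fun i hi => hstep (n / 2 + i) (by omega)) (fun i hi => havoid (n / 2 + i) (by omega))
    rw [add_zero, show n / 2 + (n - n / 2) = n by omega] at hsecond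
    have := hd.dist_comm (γ (n / 2)) p
    have := hd.dist_comm (γ n) p
    rw [add_mul, one_mul]
    rcases hd.four_point (γ 0) (γ (n / 2)) (γ n) p with h | h <;> omega

theorem exists_farthest_between (hd : IsGeodesicHyperbolic d δ) {S : Set α} {x y p : α} {κ : ℕ}
    (hx : x ∈ S) (hp : d x p + d p y = d x y) (hfar : ∀ k ∈ S, κ < d p k) :
    ∃ D > κ, (∃ q, d x q + d q y = d x y ∧ ∀ k ∈ S, D ≤ d q k) ∧
      ∀ z, d x z + d z y = d x y → ∃ k ∈ S, d z k ≤ D := by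
  set T : Set ℕ := {D | ∃ q, d x q + d q y = d x y ∧ ∀ k ∈ S, D ≤ d q k}
  have hκT : κ + 1 ∈ T := ⟨p, hp, hfar⟩
  have hbdd : BddAbove T := by
    refine ⟨d x y, ?_⟩
    rintro D ⟨q, hq, hD⟩
    have := hD x hx
    have := hd.dist_comm q x
    omega
  refine ⟨sSup T, le_csSup hbdd hκT, Nat.sSup_mem ⟨_, hκT⟩ hbdd, fun z hz => ?_⟩
  by_contra! h
  have := le_csSup hbdd (show sSup T + 1 ∈ T from ⟨z, hz, h⟩)
  omega

theorem exists_mem_near_between (hd : IsGeodesicHyperbolic d δ) {S : Set α} {x y p : α} {D : ℕ}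
    (hx : x ∈ S) (hp : d x p + d p y = d x y) (hDx : D ≤ d p x)
    (hnear : ∀ z, d x z + d z y = d x y → ∃ k ∈ S, d z k ≤ D) :
    ∃ u, ∃ u' ∈ S, d x u + d u p = d x p ∧ d u' p ≤ 3 * D ∧ 2 * D + d u u' ≤ d u p + d u' p := by
  have := hd.dist_comm p x
  have := hd.dist_self x
  rcases le_total (d x p) (2 * D) with hle | hle
  · exact ⟨x, x, hx, by omega, by omega, by omega⟩
  · obtain ⟨u, hxu, hup⟩ := hd.exists_between x p (d x p - 2 * D) (by omega)
    have := hd.dist_triangle u p y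
    have := hd.dist_triangle x u y
    obtain ⟨u', hu', huu'⟩ := hnear u (by omega)
    have := hd.dist_triangle u u' p
    have := hd.dist_triangle u' u p
    have := hd.dist_comm u u'
    exact ⟨u, u', hu', by omega, by omega, by omega⟩

/-- The Morse lemma: a path in `S` of length linear in the distance of its endpoints is too short
to make a large detour around a point of the geodesic, by `two_mul_add_dist_le_of_path`. -/
theorem exists_geodesic_near_of_paths (hd : IsGeodesicHyperbolic d δ) {S : Set α} {A B M : ℕ}
    (hpath : ∀ u ∈ S, ∀ v ∈ S, ∃ (n : ℕ) (γ : ℕ → α), n ≤ A * d u v + B ∧ γ 0 = u ∧ γ n = v ∧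
      (∀ i, γ i ∈ S) ∧ ∀ i < n, d (γ i) (γ (i + 1)) ≤ M) :
    ∃ κ, ∀ x ∈ S, ∀ y ∈ S, ∀ p, d x p + d p y = d x y → ∃ k ∈ S, d p k ≤ κ := by
  obtain ⟨N, hN⟩ := exists_forall_linear_le_two_pow_div (6 * A) B δ
  refine ⟨N + M + 2 * δ, fun x hx y hy p₀ hp₀ => ?_⟩
  by_contra! hfar
  obtain ⟨D, hD, ⟨p, hp, hDp⟩, hnear⟩ := hd.exists_farthest_between hx hp₀ hfar
  obtain ⟨u, u', hu', hxu, hu'p, huu'⟩ := hd.exists_mem_near_between hx hp (hDp x hx) hnear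
  obtain ⟨v, v', hv', hyv, hv'p, hvv'⟩ := hd.exists_mem_near_between (x := y) (y := x) (p := p) hy
    (by grind [hd.dist_comm]) (hDp y hy) (fun z hz => hnear z (by grind [hd.dist_comm]))
  obtain ⟨n, γ, hn, rfl, rfl, hγ, hstep⟩ := hpath u' hu' v' hv'
  have hdist : d (γ 0) (γ n) ≤ 6 * D := by
    have := hd.dist_triangle (γ 0) p (γ n)
    have := hd.dist_comm p (γ n)
    omega
  have hshort : n ≤ 2 ^ (D / (δ + 1)) :=
    calc n ≤ A * d (γ 0) (γ n) + B := hn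
      _ ≤ A * (6 * D) + B := by gcongr
      _ = 6 * A * D + B := by ring
      _ ≤ 2 ^ (D / (δ + 1)) := hN D (by omega)
  have hlog := hd.two_mul_add_dist_le_of_path p _ γ n hshort hstep
    (fun i _ => hd.dist_comm p (γ i) ▸ hDp _ (hγ i))
  have hqδ : D / (δ + 1) * δ ≤ D :=
    (Nat.mul_le_mul_left _ (Nat.le_succ δ)).trans (Nat.div_mul_le_self D (δ + 1))
  have huv : d u p + d v p ≤ d u v := by
    have := hd.dist_triangle4 x u v y
    have := hd.dist_comm v y
    have := hd.dist_comm p y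
    have := hd.dist_comm p v
    omega
  have := hd.four_point u (γ 0) v p
  have := hd.four_point (γ 0) (γ n) v p
  grind [hd.dist_comm]

end IsGeodesicHyperbolic

end Morse

/-! ### Shortcuts in a hyperbolic space -/

section Shortcuts

variable {α : Type*}

/-- `ShortcutPath d J K x y n` says that `n` is the length of some path from `x` to `y` in which,
besides moving at the price given by `d`, one may jump from `g` to `g'` at the price `K` whenever
`J g g'`. -/
inductive ShortcutPath (d : α → α → ℕ) (J : α → α → Prop) (K : ℕ) : α → α → ℕ → Prop
  | direct (x y : α) : ShortcutPath d J K x y (d x y)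
  | cons {x g g' y : α} {n : ℕ} : J g g' → ShortcutPath d J K g' y n →
      ShortcutPath d J K x y (d x g + K + n)

/-- The discounted distance of Epstein and Fujiwara: the length of a shortest path with
shortcuts. It is not symmetric since shortcuts have a direction. -/
noncomputable def shortcutDist (d : α → α → ℕ) (J : α → α → Prop) (K : ℕ) (x y : α) : ℕ :=
  sInf {n | ShortcutPath d J K x y n}

/-- How much harder it is to go from `x` to `y` than to come back. -/
noncomputable def shortcutAsymmetry (d : α → α → ℕ) (J : α → α → Prop) (K : ℕ) (x y : α) : ℝ :=
  shortcutDist d J K x y - shortcutDist d J K y x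

variable {d : α → α → ℕ} {J : α → α → Prop} {K C δ : ℕ}

theorem ShortcutPath.shortcutDist_le {x y : α} {n : ℕ} (h : ShortcutPath d J K x y n) :
    shortcutDist d J K x y ≤ n :=
  Nat.sInf_le h

theorem shortcutPath_shortcutDist (x y : α) : ShortcutPath d J K x y (shortcutDist d J K x y) :=
  Nat.sInf_mem ⟨_, .direct x y⟩

theorem shortcutDist_le_dist (x y : α) : shortcutDist d J K x y ≤ d x y :=
  (ShortcutPath.direct x y).shortcutDist_le

theorem ShortcutPath.snoc {x g g' y : α} {m : ℕ} (h : ShortcutPath d J K x g m) (hj : J g g') :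
    ShortcutPath d J K x y (m + K + d g' y) := by
  induction h with
  | direct => exact .cons hj (.direct _ _)
  | cons hj' _ ih => simpa only [add_assoc] using ShortcutPath.cons hj' (ih hj)

theorem ShortcutPath.map {φ : α → α} (hd : ∀ x y, d (φ x) (φ y) = d x y)
    (hJ : ∀ g g', J g g' → J (φ g) (φ g')) {x y : α} {n : ℕ} (h : ShortcutPath d J K x y n) :
    ShortcutPath d J K (φ x) (φ y) n := by
  induction h with
  | direct x y => simpa only [hd] using ShortcutPath.direct (d := d) (J := J) (K := K) (φ x) (φ y)
  | @cons x g _ _ _ hj _ ih => simpa only [hd] using ShortcutPath.cons (x := φ x) (hJ _ _ hj) ih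

theorem shortcutDist_eq_dist_or (x y : α) : shortcutDist d J K x y = d x y ∨
    ∃ g g', J g g' ∧ shortcutDist d J K x y = d x g + K + shortcutDist d J K g' y := by
  generalize hn : shortcutDist d J K x y = n
  have hpath := hn ▸ shortcutPath_shortcutDist x y
  cases hpath with
  | direct => exact .inl rfl
  | @cons _ g g' _ _ hj hpath =>
    have := (ShortcutPath.cons (x := x) hj
      (shortcutPath_shortcutDist (d := d) (K := K) g' y)).shortcutDist_le
    have := hpath.shortcutDist_le
    exact .inr ⟨g, g', hj, by omega⟩

namespace IsGeodesicHyperbolic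

theorem exists_shortcutPath_of_dist_add (hd : IsGeodesicHyperbolic d δ) {x y z : α} {n : ℕ}
    (h : ShortcutPath d J K y z n) :
    ∃ m ≤ d x y + n, ShortcutPath d J K x z m := by
  cases h with
  | direct => exact ⟨_, hd.dist_triangle x y z, .direct x z⟩
  | @cons _ g _ _ _ hj h =>
    have := hd.dist_triangle x y g
    exact ⟨_, by omega, .cons hj h⟩

theorem exists_shortcutPath_trans (hd : IsGeodesicHyperbolic d δ) {x y z : α} {m n : ℕ}
    (hxy : ShortcutPath d J K x y m)
    (hyz : ShortcutPath d J K y z n) : ∃ k ≤ m + n, ShortcutPath d J K x z k := by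
  induction hxy with
  | direct => exact hd.exists_shortcutPath_of_dist_add hyz
  | cons hj _ ih =>
    obtain ⟨k, hk, hpath⟩ := ih hyz
    exact ⟨_, by omega, .cons hj hpath⟩

theorem shortcutPath_flip (hd : IsGeodesicHyperbolic d δ) {x y : α} {n : ℕ}
    (h : ShortcutPath d J K x y n) :
    ShortcutPath d (flip J) K y x n := by
  induction h with
  | direct x y => simpa only [hd.dist_comm y x] using ShortcutPath.direct (d := d) y x
  | @cons x g g' y n hj _ ih =>
    convert ih.snoc (y := x) (show flip J g' g from hj) using 1
    rw [hd.dist_comm x g]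
    omega

theorem shortcutDist_flip (hd : IsGeodesicHyperbolic d δ) (x y : α) : shortcutDist d
    (flip J) K y x = shortcutDist d J K x y :=
  le_antisymm (hd.shortcutPath_flip (shortcutPath_shortcutDist x y)).shortcutDist_le
    (hd.shortcutPath_flip (J := flip J) (shortcutPath_shortcutDist y x)).shortcutDist_le

theorem shortcutDist_self (hd : IsGeodesicHyperbolic d δ) (x : α) : shortcutDist d J K x x = 0 := by
  have := shortcutDist_le_dist (d := d) (J := J) (K := K) x x
  have := hd.dist_self x
  omega

theorem shortcutDist_triangle (hd : IsGeodesicHyperbolic d δ) (x y z : α) :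
    shortcutDist d J K x z ≤ shortcutDist d J K x y + shortcutDist d J K y z := by
  obtain ⟨k, hk, h⟩ := hd.exists_shortcutPath_trans (J := J) (K := K)
    (shortcutPath_shortcutDist x y) (shortcutPath_shortcutDist y z)
  exact h.shortcutDist_le.trans hk

theorem shortcutDist_le_of_shortcut (hd : IsGeodesicHyperbolic d δ) {g g' : α}
    (hj : J g g') : shortcutDist d J K g g' ≤ K := by
  have := (ShortcutPath.cons (x := g) (K := K) hj (.direct (d := d) g' g')).shortcutDist_le
  have := hd.dist_self g
  have := hd.dist_self g'
  omega

theorem shortcutDist_le_via (hd : IsGeodesicHyperbolic d δ) {g g' : α} (hj : J g g') (x y : α) :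
    shortcutDist d J K x y ≤ shortcutDist d J K x g + K + shortcutDist d J K g' y := by
  have := hd.shortcutDist_triangle (J := J) (K := K) x g y
  have := hd.shortcutDist_triangle (J := J) (K := K) g g' y
  have := hd.shortcutDist_le_of_shortcut (K := K) hj
  omega

/-- Since the shortcuts are long, a shortest path which starts with a shortcut does not backtrack
after it. -/
theorem coarselyBetween_of_first_shortcut (hd : IsGeodesicHyperbolic d δ)
    (hJ : ∀ g g', J g g' → d g g' = K + C) (hK : 2 * C + 2 * δ < K) {x g g' y : α} (hj : J g g')
    (h : shortcutDist d J K x y = d x g + K + shortcutDist d J K g' y) :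
    CoarselyBetween d (2 * C + δ) x g' y := by
  induction hn : shortcutDist d J K g' y using Nat.strong_induction_on generalizing x g g' with
  | _ n ih =>
  have := hJ _ _ hj
  have := hd.dist_triangle x g g'
  have := shortcutDist_le_dist (d := d) (J := J) (K := K) x y
  obtain h' | ⟨k, k', hk, h'⟩ := shortcutDist_eq_dist_or (d := d) (J := J) (K := K) g' y
  · omega
  · have := hJ _ _ hk
    have hnext := ih _ (by omega) hk h' rfl
    have := hd.dist_triangle g' k k'
    have := hd.shortcutDist_triangle (J := J) (K := K) x k' y
    have := shortcutDist_le_dist (d := d) (J := J) (K := K) x k'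
    have := hd.shortcutDist_triangle (J := J) (K := K) g' k' y
    have := shortcutDist_le_dist (d := d) (J := J) (K := K) g' k'
    have := (hd.coarselyBetween_of_long_segment (x := x) (u := g') (v := k') (y := y)
      (a := 2 * C) (b := 2 * C + δ) (by omega) hnext (by omega)).1
    omega

theorem coarselyBetween_of_last_shortcut (hd : IsGeodesicHyperbolic d δ)
    (hJ : ∀ g g', J g g' → d g g' = K + C) (hK : 2 * C + 2 * δ < K) {x g g' y : α} (hj : J g g')
    (h : shortcutDist d J K x y = shortcutDist d J K x g + K + d g' y) :
    CoarselyBetween d (2 * C + δ) x g y := by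
  refine hd.coarselyBetween_symm (hd.coarselyBetween_of_first_shortcut (J := flip J)
    (fun a b hab => hd.dist_comm a b ▸ hJ b a hab) hK (show flip J g' g from hj) ?_)
  rw [hd.shortcutDist_flip, hd.shortcutDist_flip, hd.dist_comm y g']
  omega

theorem coarselyBetween_of_shortcut (hd : IsGeodesicHyperbolic d δ)
    (hJ : ∀ g g', J g g' → d g g' = K + C) (hK : 2 * C + 2 * δ < K) {x g g' y : α} (hj : J g g')
    (h : shortcutDist d J K x y = shortcutDist d J K x g + K + shortcutDist d J K g' y) :
    CoarselyBetween d (2 * C + 2 * δ) x g' y := by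
  have := hJ _ _ hj
  have := hd.dist_self g
  have := hd.dist_self g'
  have := hd.shortcutDist_self (J := J) (K := K) g
  have := hd.shortcutDist_self (J := J) (K := K) g'
  have := hd.shortcutDist_triangle (J := J) (K := K) x g y
  have := hd.shortcutDist_triangle (J := J) (K := K) x g' y
  have := hd.shortcutDist_le_via (K := K) hj g y
  have := hd.shortcutDist_le_via (K := K) hj x g'
  have hfirst := hd.coarselyBetween_of_first_shortcut (x := g) (y := y) hJ hK hj (by omega)
  have hlast := hd.coarselyBetween_of_last_shortcut (x := x) (y := g') hJ hK hj (by omega)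
  have := (hd.coarselyBetween_of_long_segment hlast hfirst (by omega)).2.1
  omega

theorem dist_add_dist_add_dist_le_of_first_shortcut (hd : IsGeodesicHyperbolic d δ)
    (hJ : ∀ g g', J g g' → d g g' = K + C) (hK : 2 * C + 2 * δ < K) {x g g' y : α} (hj : J g g')
    (h : shortcutDist d J K x y = d x g + K + shortcutDist d J K g' y) :
    d x g + d g g' + d g' y ≤ d x y + (3 * C + δ) := by
  have := hJ _ _ hj
  have := hd.coarselyBetween_of_first_shortcut hJ hK hj h
  have := hd.shortcutDist_triangle (J := J) (K := K) x g' y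
  have := shortcutDist_le_dist (d := d) (J := J) (K := K) x g'
  omega

theorem exists_last_breakpoint (hd : IsGeodesicHyperbolic d δ)
    (hJ : ∀ g g', J g g' → d g g' = K + C) (hK : 2 * C + 2 * δ < K) (x m y : α) :
    ∃ b, shortcutDist d J K x b + shortcutDist d J K b y = shortcutDist d J K x y ∧
      CoarselyBetween d (2 * C + 2 * δ) x b y ∧ d x b ≤ d x m ∧
      ∀ g g', J g g' → shortcutDist d J K b y = d b g + K + shortcutDist d J K g' y →
        d x m ≤ d x g' := by
  set S : Set ℕ := {n | ∃ b, shortcutDist d J K x b = n ∧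
    shortcutDist d J K x b + shortcutDist d J K b y = shortcutDist d J K x y ∧
    CoarselyBetween d (2 * C + 2 * δ) x b y ∧ d x b ≤ d x m}
  have := hd.dist_self x
  have hne : S.Nonempty :=
    ⟨_, x, rfl, by rw [hd.shortcutDist_self, zero_add], by omega, by omega⟩
  have hbdd : BddAbove S := by
    refine ⟨shortcutDist d J K x y, ?_⟩
    rintro _ ⟨b, rfl, hb, -⟩
    omega
  obtain ⟨b, hbS, hxby, hbetween, hheight⟩ := Nat.sSup_mem hne hbdd
  refine ⟨b, hxby, hbetween, hheight, fun g g' hj hg => ?_⟩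
  by_contra! hlt
  have := hd.shortcutDist_triangle (J := J) (K := K) x b g
  have := shortcutDist_le_dist (d := d) (J := J) (K := K) b g
  have := hd.shortcutDist_le_via (K := K) hj x y
  have hbetween' := hd.coarselyBetween_of_shortcut (x := x) (y := y) hJ hK hj (by omega)
  have := hd.shortcutDist_triangle (J := J) (K := K) x g g'
  have := hd.shortcutDist_le_of_shortcut (K := K) hj
  have := hd.shortcutDist_triangle (J := J) (K := K) x g' y
  have := le_csSup hbdd (show shortcutDist d J K x g' ∈ S from
    ⟨g', rfl, by omega, hbetween', by omega⟩)
  omega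

theorem exists_shortcut_free_segment (hd : IsGeodesicHyperbolic d δ)
    (hJ : ∀ g g', J g g' → d g g' = K + C) (hK : 2 * C + 2 * δ < K) {x m y : α} {c : ℕ}
    (hm : CoarselyBetween d c x m y) :
    ∃ b z, shortcutDist d J K x b + d b z + shortcutDist d J K z y ≤ shortcutDist d J K x y ∧
      CoarselyBetween d (2 * C + 2 * δ) x b y ∧ CoarselyBetween d (3 * C + δ) b z y ∧
      d x b ≤ d x m ∧ d x m ≤ d x z + (K + C + c) := by
  obtain ⟨b, hxby, hbetween, hheight, hlast⟩ := hd.exists_last_breakpoint hJ hK x m y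
  obtain h | ⟨g, g', hj, h⟩ := shortcutDist_eq_dist_or (d := d) (J := J) (K := K) b y
  · have := hd.shortcutDist_self (J := J) (K := K) y
    have := hd.dist_self y
    exact ⟨b, y, by omega, hbetween, by omega, hheight, by omega⟩
  · have := hJ _ _ hj
    have := hlast g g' hj h
    have := hd.dist_add_dist_add_dist_le_of_first_shortcut hJ hK hj h
    have := hd.shortcutDist_le_via (K := K) hj g y
    have := hd.shortcutDist_self (J := J) (K := K) g
    have := hd.dist_triangle g g' y
    have := hd.dist_triangle x g g'
    exact ⟨b, g, by omega, hbetween, by omega, hheight, by omega⟩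

theorem shortcutDist_add_shortcutDist_le (hd : IsGeodesicHyperbolic d δ)
    (hJ : ∀ g g', J g g' → d g g' = K + C) (hK : 2 * C + 2 * δ < K) {x m y : α} {c : ℕ}
    (hm : CoarselyBetween d c x m y) :
    shortcutDist d J K x m + shortcutDist d J K m y ≤
      shortcutDist d J K x y + 2 * (10 * C + 7 * δ + 2 * c + K) := by
  obtain ⟨b, z, hsum, hxby, hbzy, hbm, hmz⟩ := hd.exists_shortcut_free_segment hJ hK hm
  obtain ⟨p, hbp, hpz⟩ := hd.exists_between b z (min (d x m - d x b) (d b z)) (min_le_right _ _)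
  have := hd.dist_triangle x b p
  have := hd.dist_triangle x p y
  have := hd.dist_triangle x p z
  have := hd.dist_triangle p z y
  have hpm : d p m ≤ 10 * C + 7 * δ + 2 * c + K := by
    have := hd.dist_le_of_coarselyBetween (x := x) (y := y) (m := p) (p := m) (a := 5 * C + 3 * δ)
      (b := c) (e := 5 * C + 3 * δ + K + c) (by omega) hm (by omega) (by omega)
    omega
  have := hd.shortcutDist_triangle (J := J) (K := K) x b p
  have := hd.shortcutDist_triangle (J := J) (K := K) p z y
  have := hd.shortcutDist_triangle (J := J) (K := K) x p m
  have := hd.shortcutDist_triangle (J := J) (K := K) m p y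
  have := shortcutDist_le_dist (d := d) (J := J) (K := K) b p
  have := shortcutDist_le_dist (d := d) (J := J) (K := K) p z
  have := shortcutDist_le_dist (d := d) (J := J) (K := K) p m
  have := shortcutDist_le_dist (d := d) (J := J) (K := K) m p
  have := hd.dist_comm p m
  omega

theorem exists_shortcutAsymmetry_add_le (hd : IsGeodesicHyperbolic d δ)
    (hJ : ∀ g g', J g g' → d g g' = K + C) (hK : 2 * C + 2 * δ < K) :
    ∃ D : ℝ, 0 ≤ D ∧ ∀ x y z, |shortcutAsymmetry d J K x z - shortcutAsymmetry d J K x y -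
      shortcutAsymmetry d J K y z| ≤ D := by
  obtain ⟨E, hE⟩ : ∃ E, ∀ u m v, CoarselyBetween d (δ + 2) u m v →
      shortcutDist d J K u m + shortcutDist d J K m v ≤ shortcutDist d J K u v + E :=
    ⟨_, fun _ _ _ h => hd.shortcutDist_add_shortcutDist_le hJ hK h⟩
  have split {u m v : α} (h : CoarselyBetween d (δ + 2) u m v) :
      |(shortcutDist d J K u m + shortcutDist d J K m v - shortcutDist d J K u v : ℝ)| ≤ E := by
    have hle := hE u m v h
    have hge := hd.shortcutDist_triangle (J := J) (K := K) u m v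
    rify at hle hge
    rw [abs_le]
    constructor <;> linarith
  refine ⟨6 * E, by positivity, fun x y z => ?_⟩
  obtain ⟨m, hxy, hxz, hyz⟩ := hd.exists_center x y z
  have := abs_le.1 (split hxy)
  have := abs_le.1 (split hxz)
  have := abs_le.1 (split hyz)
  have := abs_le.1 (split (hd.coarselyBetween_symm hxy))
  have := abs_le.1 (split (hd.coarselyBetween_symm hxz))
  have := abs_le.1 (split (hd.coarselyBetween_symm hyz))
  simp only [shortcutAsymmetry]
  rw [abs_le]
  constructor <;> linarith

end IsGeodesicHyperbolic

end Shortcuts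

/-! ### Homogenization of quasimorphisms -/

section Homogenization

open Filter Topology

variable {G : Type*} [Group G] {q : G → ℝ} {D : ℝ}

/-- The homogenization `x ↦ lim q (x ^ n) / n` of a quasimorphism. The limit has a junk value if it
does not exist, which `IsQuasimorphism.tendsto_homogenization` excludes. -/
noncomputable def homogenization (q : G → ℝ) (x : G) : ℝ :=
  limUnder atTop fun n : ℕ => q (x ^ n) / n

theorem abs_map_pow_sub_mul_le (hD : ∀ x y : G, |q (x * y) - q x - q y| ≤ D) (x : G) (n : ℕ) :
    |q (x ^ n) - n * q x| ≤ (n + 1) * D := by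
  induction n with
  | zero => simpa using hD 1 1
  | succ n ih =>
    have hstep := hD (x ^ n) x
    rw [← pow_succ] at hstep
    rw [abs_le] at *
    push_cast
    constructor <;> linarith

theorem abs_map_pow_div_sub_le (hD : ∀ x y : G, |q (x * y) - q x - q y| ≤ D) (x : G) {n : ℕ}
    (hn : 0 < n) : |q (x ^ n) / n - q x| ≤ 2 * D := by
  have hD0 : 0 ≤ D := (abs_nonneg _).trans (hD 1 1)
  have hn1 : (1 : ℝ) ≤ n := by exact_mod_cast hn
  rw [show q (x ^ n) / n - q x = (q (x ^ n) - n * q x) / n by field_simp, abs_div,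
    Nat.abs_cast, div_le_iff₀ (by linarith)]
  exact (abs_map_pow_sub_mul_le hD x n).trans (by nlinarith)

namespace IsQuasimorphism

theorem tendsto_homogenization (hq : IsQuasimorphism q) (x : G) :
    Tendsto (fun n : ℕ => q (x ^ n) / n) atTop (𝓝 (homogenization q x)) := by
  obtain ⟨D, hD0, hD⟩ := hq
  have hsub : Subadditive fun n : ℕ => q (x ^ n) + D := fun m n => by
    have := (abs_le.1 (hD (x ^ m) (x ^ n))).2
    simp only [pow_add]
    linarith
  have hbdd : BddBelow (Set.range fun n : ℕ => (q (x ^ n) + D) / n) := by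
    refine ⟨-|q x| - 2 * D, ?_⟩
    rintro _ ⟨n, rfl⟩
    rcases n.eq_zero_or_pos with rfl | hn
    · simp only [Nat.cast_zero, div_zero]
      linarith [abs_nonneg (q x)]
    · have := (abs_le.1 (abs_map_pow_div_sub_le hD x hn)).1
      have : 0 ≤ D / n := by positivity
      simp only [add_div]
      linarith [neg_abs_le (q x)]
  refine tendsto_nhds_limUnder ⟨hsub.lim, ?_⟩
  simpa only [add_div, add_sub_cancel_right, sub_zero] using
    (hsub.tendsto_lim hbdd).sub (tendsto_const_div_atTop_nhds_zero_nat D)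

theorem homogenization_pow (hq : IsQuasimorphism q) (x : G) (n : ℕ) :
    homogenization q (x ^ n) = n * homogenization q x := by
  refine tendsto_nhds_unique (hq.tendsto_homogenization (x ^ n)) ?_
  rcases n.eq_zero_or_pos with rfl | hn
  · simpa using tendsto_const_div_atTop_nhds_zero_nat (q 1)
  · have hsubseq : Tendsto (fun m : ℕ => n * (q (x ^ (n * m)) / ((n * m : ℕ) : ℝ))) atTop
        (𝓝 (n * homogenization q x)) :=
      ((hq.tendsto_homogenization x).comp (tendsto_id.const_mul_atTop' hn)).const_mul _
    refine hsubseq.congr fun m => ?_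
    rw [pow_mul]
    push_cast
    field_simp

theorem isHomogeneousQM_homogenization (hq : IsQuasimorphism q) :
    IsHomogeneousQM (homogenization q) := by
  refine ⟨?_, hq.homogenization_pow⟩
  obtain ⟨D, hD0, hD⟩ := id hq
  have hclose (x : G) : |homogenization q x - q x| ≤ 2 * D :=
    le_of_tendsto ((hq.tendsto_homogenization x).sub_const _).abs <| by
      filter_upwards [eventually_gt_atTop 0] with n hn using abs_map_pow_div_sub_le hD x hn
  refine ⟨7 * D, by positivity, fun x y => ?_⟩
  have := abs_le.1 (hclose x)
  have := abs_le.1 (hclose y)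
  have := abs_le.1 (hclose (x * y))
  have := abs_le.1 (hD x y)
  rw [abs_le]
  constructor <;> linarith

end IsQuasimorphism

end Homogenization

/-! ### The Epstein–Fujiwara quasimorphism -/

section Counting

variable {G : Type*} [Group G] {d : G → G → ℕ} {w : G} {δ K C : ℕ}

/-- A hyperbolic geodesic distance on a group which is invariant under left translations, such as
the word metric of a hyperbolic Cayley graph. -/
structure IsLeftInvariantHyperbolic (d : G → G → ℕ) (δ : ℕ) : Prop
    extends IsGeodesicHyperbolic d δ where
  dist_mul_left : ∀ a x y, d (a * x) (a * y) = d x y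

/-- Some translate of the segment from `1` to `w` lies, with the same direction and up to an error
`e`, on the way from `x` to `y`. -/
def OccursBetween (d : G → G → ℕ) (w : G) (e : ℕ) (x y : G) : Prop :=
  ∃ g, d x g + d g (g * w) + d (g * w) y ≤ d x y + e

/-- The counting quasimorphism of `w`, before homogenization: it compares the costs of going from
`1` to `g` and back if translates of `w`, but not of `w⁻¹`, are available at the price `K`. -/
noncomputable def countingQM (d : G → G → ℕ) (w : G) (K : ℕ) (g : G) : ℝ :=
  shortcutAsymmetry d (· * w = ·) K 1 g

namespace IsLeftInvariantHyperbolic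

theorem dist_self_mul (hd : IsLeftInvariantHyperbolic d δ) (a x : G) : d a (a * x) = d 1 x := by
  simpa only [mul_one] using hd.dist_mul_left a 1 x

theorem dist_inv_mul (hd : IsLeftInvariantHyperbolic d δ) (a x y : G) :
    d (a⁻¹ * x) y = d x (a * y) := by
  simpa only [mul_inv_cancel_left] using (hd.dist_mul_left a (a⁻¹ * x) y).symm

theorem shortcutDist_mul_left (hd : IsLeftInvariantHyperbolic d δ) (a x y : G) :
    shortcutDist d (· * w = ·) K (a * x) (a * y) = shortcutDist d (· * w = ·) K x y := by
  have hle (a x y : G) :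
      shortcutDist d (· * w = ·) K (a * x) (a * y) ≤ shortcutDist d (· * w = ·) K x y :=
    ((shortcutPath_shortcutDist x y).map (hd.dist_mul_left a)
      fun g g' h => by rw [mul_assoc, h]).shortcutDist_le
  exact (hle a x y).antisymm (by simpa only [inv_mul_cancel_left] using hle a⁻¹ (a * x) (a * y))

theorem shortcutDist_one_pow_le (hd : IsLeftInvariantHyperbolic d δ) (n : ℕ) :
    shortcutDist d (· * w = ·) K 1 (w ^ n) ≤ n * K := by
  induction n with
  | zero => simp [hd.shortcutDist_self]
  | succ n ih =>
    have := hd.shortcutDist_triangle (J := (· * w = ·)) (K := K) 1 (w ^ n) (w ^ (n + 1))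
    have := hd.shortcutDist_le_of_shortcut (J := (· * w = ·)) (K := K) (pow_succ w n).symm
    rw [add_mul, one_mul]
    omega

theorem isQuasimorphism_countingQM (hd : IsLeftInvariantHyperbolic d δ) (hw : d 1 w = K + C)
    (hK : 2 * C + 2 * δ < K) : IsQuasimorphism (countingQM d w K) := by
  obtain ⟨D, hD0, hD⟩ := hd.exists_shortcutAsymmetry_add_le (J := (· * w = ·)) (K := K) (C := C)
    (by rintro g _ rfl; rw [hd.dist_self_mul, hw]) hK
  refine ⟨D, hD0, fun x y => ?_⟩
  have hy : countingQM d w K y = shortcutAsymmetry d (· * w = ·) K x (x * y) := by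
    have h₁ := hd.shortcutDist_mul_left (w := w) (K := K) x 1 y
    have h₂ := hd.shortcutDist_mul_left (w := w) (K := K) x y 1
    rw [mul_one] at h₁ h₂
    simp only [countingQM, shortcutAsymmetry, h₁, h₂]
  rw [hy]
  exact hD 1 x (x * y)

theorem shortcutDist_eq_dist_of_not_occursBetween (hd : IsLeftInvariantHyperbolic d δ)
    (hw : d 1 w = K + C) (hK : 2 * C + 2 * δ < K) {x y : G}
    (h : ¬ OccursBetween d w (3 * C + δ) x y) : shortcutDist d (· * w = ·) K x y = d x y := by
  obtain h' | ⟨g, _, rfl, h'⟩ :=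
    shortcutDist_eq_dist_or (d := d) (J := (· * w = ·)) (K := K) x y
  · exact h'
  · refine absurd ⟨g, ?_⟩ h
    exact hd.dist_add_dist_add_dist_le_of_first_shortcut
      (by rintro g _ rfl; rw [hd.dist_self_mul, hw]) hK rfl h'

theorem occursBetween_one_right_iff (hd : IsLeftInvariantHyperbolic d δ) {e : ℕ} {x : G} :
    OccursBetween d w e x 1 ↔ OccursBetween d w e 1 x⁻¹ := by
  have key {x y : G} (a : G) (h : OccursBetween d w e x y) :
      OccursBetween d w e (a * x) (a * y) := by
    obtain ⟨g, hg⟩ := h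
    exact ⟨a * g, by simpa only [mul_assoc, hd.dist_mul_left] using hg⟩
  exact ⟨fun h => by simpa using key x⁻¹ h, fun h => by simpa using key x h⟩

theorem countingQM_eq_zero (hd : IsLeftInvariantHyperbolic d δ) (hw : d 1 w = K + C)
    (hK : 2 * C + 2 * δ < K) {x : G} (hx : ¬ OccursBetween d w (3 * C + δ) 1 x)
    (hx' : ¬ OccursBetween d w (3 * C + δ) 1 x⁻¹) : countingQM d w K x = 0 := by
  have h₁ := hd.shortcutDist_eq_dist_of_not_occursBetween hw hK hx
  have h₂ := hd.shortcutDist_eq_dist_of_not_occursBetween hw hK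
    (mt hd.occursBetween_one_right_iff.1 hx')
  rw [countingQM, shortcutAsymmetry, h₁, h₂, hd.dist_comm, sub_self]

theorem homogenization_countingQM_le (hd : IsLeftInvariantHyperbolic d δ) (hw : d 1 w = K + C)
    (hK : 2 * C + 2 * δ < K) (hinv : ∀ n, ¬ OccursBetween d w (3 * C + δ) (w ^ n) 1)
    (hlong : ∀ n, n * (K + 1) ≤ d 1 (w ^ n)) : homogenization (countingQM d w K) w ≤ -1 := by
  refine le_of_tendsto ((hd.isQuasimorphism_countingQM hw hK).tendsto_homogenization w) ?_
  filter_upwards [Filter.eventually_gt_atTop 0] with n hn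
  have hn0 : (0 : ℝ) < n := by exact_mod_cast hn
  have hforward := hd.shortcutDist_one_pow_le (w := w) (K := K) n
  have hback := hlong n
  rw [hd.dist_comm, ← hd.shortcutDist_eq_dist_of_not_occursBetween hw hK (hinv n)] at hback
  rw [div_le_iff₀ hn0, countingQM, shortcutAsymmetry]
  rify at hforward hback
  linarith

theorem exists_isHomogeneousQM_of_not_occursBetween (hd : IsLeftInvariantHyperbolic d δ)
    (hw : d 1 w = K + C) (hK : 2 * C + 2 * δ < K)
    (hinv : ∀ n, ¬ OccursBetween d w (3 * C + δ) (w ^ n) 1)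
    (hlong : ∀ n, n * (K + 1) ≤ d 1 (w ^ n)) :
    ∃ q : G → ℝ, IsHomogeneousQM q ∧ q w ≤ -1 ∧
      ∀ Q : Subgroup G, (∀ x ∈ Q, ¬ OccursBetween d w (3 * C + δ) 1 x) → ∀ x ∈ Q, q x = 0 := by
  have hq := hd.isQuasimorphism_countingQM hw hK
  refine ⟨_, hq.isHomogeneousQM_homogenization, hd.homogenization_countingQM_le hw hK hinv hlong,
    fun Q hQ x hx => tendsto_nhds_unique (hq.tendsto_homogenization x) ?_⟩
  refine tendsto_const_nhds.congr fun n => ?_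
  rw [hd.countingQM_eq_zero hw hK (hQ _ (Q.pow_mem hx n)) (hQ _ (Q.inv_mem (Q.pow_mem hx n))),
    zero_div]

end IsLeftInvariantHyperbolic

end Counting

/-! ### Geometry of a hyperbolically embedded subgroup -/

section HypEmbedded

variable {G : Type*} [Group G] {d : G → G → ℕ} {δ : ℕ} {H : Subgroup G}

/-- The properties of a hyperbolically embedded subgroup used here: it is quasiconvex, no other
coset fellow-travels it for a long time, and its balls are finite. -/
structure IsHypEmbedded (d : G → G → ℕ) (H : Subgroup G) : Prop where
  quasiconvex : ∃ κ, ∀ h ∈ H, ∀ p, d 1 p + d p h = d 1 h → ∃ k ∈ H, d p k ≤ κ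
  separated : ∀ r, ∃ R, ∀ g a b a' b', a ∈ H → b ∈ H → a' ∈ H → b' ∈ H →
    d a (g * a') ≤ r → d b (g * b') ≤ r → R ≤ d a b → g ∈ H
  finite_ball : ∀ n, {h | h ∈ H ∧ d 1 h ≤ n}.Finite

/-- The point `p` is at distance at most `r` from the coset `a * H`. -/
def NearCoset (d : G → G → ℕ) (H : Subgroup G) (r : ℕ) (a p : G) : Prop :=
  ∃ k ∈ H, d p (a * k) ≤ r

namespace NearCoset

theorem mono {r s : ℕ} {a p : G} (h : NearCoset d H r a p) (hrs : r ≤ s) :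
    NearCoset d H s a p := by
  obtain ⟨k, hk, hp⟩ := h
  exact ⟨k, hk, hp.trans hrs⟩

theorem of_dist_le {r e : ℕ} {a p q : G} (h : NearCoset d H r a p)
    (hd : IsLeftInvariantHyperbolic d δ) (hqp : d q p ≤ e) : NearCoset d H (r + e) a q := by
  obtain ⟨k, hk, hp⟩ := h
  have := hd.dist_triangle q p (a * k)
  exact ⟨k, hk, by omega⟩

theorem mul_left {r : ℕ} {a p : G} (h : NearCoset d H r a p)
    (hd : IsLeftInvariantHyperbolic d δ) (b : G) : NearCoset d H r (b * a) (b * p) := by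
  obtain ⟨k, hk, hp⟩ := h
  exact ⟨k, hk, by rwa [mul_assoc, hd.dist_mul_left]⟩

end NearCoset

namespace IsHypEmbedded

theorem exists_nearCoset_of_coarselyBetween (hH : IsHypEmbedded d H)
    (hd : IsLeftInvariantHyperbolic d δ) (e : ℕ) :
    ∃ κ, ∀ a u v p, a⁻¹ * u ∈ H → a⁻¹ * v ∈ H → CoarselyBetween d e u p v →
      NearCoset d H κ a p := by
  obtain ⟨κ, hκ⟩ := hH.quasiconvex
  refine ⟨κ + (2 * e + δ), fun a u v p hu hv hp => ?_⟩
  obtain ⟨p', hup', hp'v⟩ := hd.exists_between u v (min (d u p) (d u v)) (min_le_right _ _)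
  have hpp' : d p p' ≤ 2 * e + δ := by
    have := hd.dist_le_of_coarselyBetween (x := u) (y := v) (m := p) (p := p') (a := e) (b := 0)
      (e := e) hp (by omega) (by omega) (by omega)
    omega
  have huv : u⁻¹ * v ∈ H := by
    simpa [mul_assoc] using H.mul_mem (H.inv_mem hu) hv
  obtain ⟨k, hk, hpk⟩ := hκ (u⁻¹ * v) huv (u⁻¹ * p') (by
    rw [hd.dist_mul_left, ← hd.dist_self_mul u, ← hd.dist_self_mul u (u⁻¹ * v),
      mul_inv_cancel_left, mul_inv_cancel_left, hp'v])
  refine NearCoset.of_dist_le ⟨a⁻¹ * u * k, H.mul_mem hu hk, ?_⟩ hd hpp'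
  simpa [mul_assoc, hd.dist_inv_mul] using hpk

theorem exists_coset_eq_of_nearCoset (hH : IsHypEmbedded d H)
    (hd : IsLeftInvariantHyperbolic d δ) (r : ℕ) :
    ∃ R, ∀ a b p q, NearCoset d H r a p → NearCoset d H r a q → NearCoset d H r b p →
      NearCoset d H r b q → R ≤ d p q → a⁻¹ * b ∈ H := by
  obtain ⟨R, hR⟩ := hH.separated (2 * r)
  refine ⟨R + 2 * r, fun a b p q => ?_⟩
  rintro ⟨k₁, hk₁, hp₁⟩ ⟨k₂, hk₂, hq₂⟩ ⟨k₃, hk₃, hp₃⟩ ⟨k₄, hk₄, hq₄⟩ hpq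
  have hclose {x y z : G} (hxy : d x y ≤ r) (hxz : d x z ≤ r) : d y z ≤ 2 * r := by
    have := hd.dist_triangle y x z
    have := hd.dist_comm y x
    omega
  refine hR (a⁻¹ * b) k₁ k₂ k₃ k₄ hk₁ hk₂ hk₃ hk₄ ?_ ?_ ?_
  · rw [hd.dist_comm, mul_assoc, hd.dist_inv_mul]
    exact hclose hp₃ hp₁
  · rw [hd.dist_comm, mul_assoc, hd.dist_inv_mul]
    exact hclose hq₄ hq₂
  · rw [← hd.dist_mul_left a]
    have := hd.dist_triangle4 p (a * k₁) (a * k₂) q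
    have := hd.dist_comm q (a * k₂)
    omega

theorem exists_coarselyBetween_mul (hH : IsHypEmbedded d H) (hd : IsLeftInvariantHyperbolic d δ)
    {t : G} (ht : t ∉ H) :
    ∃ c, ∀ h ∈ H, ∀ h' ∈ H, CoarselyBetween d c 1 h (h * t * h') := by
  obtain ⟨κ, hκ⟩ := hH.exists_nearCoset_of_coarselyBetween hd (δ + 2 * d 1 t + 1)
  obtain ⟨R, hR⟩ := hH.exists_coset_eq_of_nearCoset hd (κ + d 1 t)
  refine ⟨2 * R + 2, fun h hh h' hh' => ?_⟩
  by_contra! hcon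
  set z := h * t * h' with hz
  have := hd.dist_triangle 1 z h
  have := hd.dist_triangle h 1 z
  have := hd.dist_comm z h
  have := hd.dist_comm h 1
  obtain ⟨p, hhp, hp1⟩ := hd.exists_between h 1 ((d 1 h + d h z - d 1 z) / 2) (by omega)
  have := hd.dist_comm p h
  have hpz : CoarselyBetween d (δ + 1) h p z := by
    have := hd.four_point p h z 1
    have := hd.dist_comm z 1
    omega
  have hht : d h (h * t) = d 1 t := hd.dist_self_mul h t
  have := hd.dist_comm h (h * t)
  have hp_htH : NearCoset d H (κ + d 1 t) (h * t) p := by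
    refine (hκ (h * t) (h * t) z p (by simp [H.one_mem]) (by simp [hz, mul_assoc, hh']) ?_).mono
      (by omega)
    have := hd.dist_triangle (h * t) h p
    have := hd.dist_triangle h (h * t) z
    omega
  have hp_H : NearCoset d H (κ + d 1 t) 1 p :=
    (hκ 1 h 1 p (by simpa using hh) (by simp [H.one_mem]) (by omega)).mono (by omega)
  have hh_H : NearCoset d H (κ + d 1 t) 1 h := ⟨h, hh, by rw [one_mul, hd.dist_self]; omega⟩
  have hh_htH : NearCoset d H (κ + d 1 t) (h * t) h := ⟨1, H.one_mem, by rw [mul_one]; omega⟩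
  have hmem := hR 1 (h * t) h p hh_H hp_H hh_htH hp_htH (by omega)
  rw [inv_one, one_mul] at hmem
  exact ht ((H.mul_mem_cancel_left hh).1 hmem)

theorem exists_nearCoset_of_height (hH : IsHypEmbedded d H)
    (hd : IsLeftInvariantHyperbolic d δ) (e : ℕ) (t : G) :
    ∃ r, ∀ y u, ∀ h ∈ H, ∀ g, CoarselyBetween d e 1 u y → CoarselyBetween d e 1 (u * h * t) y →
      CoarselyBetween d e 1 g y →
      (d 1 u ≤ d 1 g ∧ d 1 g ≤ d 1 (u * h * t) ∨ d 1 (u * h * t) ≤ d 1 g ∧ d 1 g ≤ d 1 u) →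
      NearCoset d H r u g := by
  obtain ⟨κ, hκ⟩ :=
    hH.exists_nearCoset_of_coarselyBetween hd (2 * e + 2 * δ + 2 * d 1 t)
  refine ⟨κ, fun y u h hh g hu hv hg hor => ?_⟩
  refine hκ u u (u * h) g (by simp [H.one_mem]) (by simpa using hh) ?_
  have : d (u * h) (u * h * t) = d 1 t := hd.dist_self_mul _ _
  have := hd.dist_comm (u * h) (u * h * t)
  have := hd.dist_triangle g (u * h * t) (u * h)
  have := hd.dist_triangle u (u * h) (u * h * t)
  have := hd.dist_triangle 1 u (u * h * t)
  have := hd.dist_triangle 1 (u * h * t) u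
  have := hd.dist_comm u (u * h * t)
  have := hd.dist_comm g (u * h * t)
  have := hd.dist_comm u g
  rcases hor with ⟨hug, hgv⟩ | ⟨hvg, hgu⟩
  · have := hd.dist_add_height_le hu hg hug
    have := hd.dist_add_height_le hg hv hgv
    omega
  · have := hd.dist_add_height_le hv hg hvg
    have := hd.dist_add_height_le hg hu hgu
    omega

theorem exists_lt_dist (hH : IsHypEmbedded d H) (hinf : (H : Set G).Infinite) (n : ℕ) :
    ∃ h ∈ H, n < d 1 h := by
  by_contra! h
  exact hinf ((hH.finite_ball n).subset fun x hx => ⟨hx, h x hx⟩)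

end IsHypEmbedded

end HypEmbedded

/-! ### The axis of a product of syllables -/

section Axis

variable {G : Type*} [Group G] {d : G → G → ℕ} {δ : ℕ} {H : Subgroup G} {t : G} {h : ℕ → G}

/-- The points `1, h₀t, h₀th₁t, …`. When `h` has period `3` they run along the axis of
`w = h₀th₁th₂t`, with `w ^ n` at the index `3n`. -/
def axisPoint (h : ℕ → G) (t : G) : ℕ → G
  | 0 => 1
  | k + 1 => axisPoint h t k * h k * t

theorem axisPoint_add_three (hp : Function.Periodic h 3) (t : G) (k : ℕ) :
    axisPoint h t (k + 3) = axisPoint h t 3 * axisPoint h t k := by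
  induction k with
  | zero => simp [axisPoint]
  | succ k ih =>
    have hsucc (m : ℕ) : axisPoint h t (m + 1) = axisPoint h t m * h m * t := rfl
    rw [add_right_comm, hsucc, hsucc k, ih, hp, ← mul_assoc, ← mul_assoc]

theorem axisPoint_three_mul (hp : Function.Periodic h 3) (t : G) (n : ℕ) :
    axisPoint h t (3 * n) = axisPoint h t 3 ^ n := by
  induction n with
  | zero => simp [axisPoint]
  | succ n ih => rw [Nat.mul_succ, axisPoint_add_three hp, ih, pow_succ']

theorem inv_axisPoint_mul_succ_notMem (hmem : ∀ k, h k ∈ H) (ht : t ∉ H) (k : ℕ) :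
    (axisPoint h t k)⁻¹ * axisPoint h t (k + 1) ∉ H := by
  simpa [axisPoint, mul_assoc, H.mul_mem_cancel_left (hmem k)] using ht

theorem dist_axisPoint_succ_le (hd : IsLeftInvariantHyperbolic d δ) (k : ℕ) :
    d (axisPoint h t k) (axisPoint h t (k + 1)) ≤ d 1 (h k) + d 1 t := by
  rw [axisPoint, mul_assoc, hd.dist_self_mul, ← hd.dist_self_mul (h k) t]
  exact hd.dist_triangle _ _ _

theorem le_dist_axisPoint_succ (hd : IsLeftInvariantHyperbolic d δ) (k : ℕ) :
    d 1 (h k) ≤ d (axisPoint h t k) (axisPoint h t (k + 1)) + d 1 t := by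
  rw [axisPoint, mul_assoc, hd.dist_self_mul, ← hd.dist_self_mul (h k) t, hd.dist_comm (h k)]
  exact hd.dist_triangle _ _ _

theorem coarselyBetween_axisPoint_succ (hd : IsLeftInvariantHyperbolic d δ) {c : ℕ}
    (hc : ∀ h ∈ H, ∀ h' ∈ H, CoarselyBetween d c 1 h (h * t * h')) (hmem : ∀ k, h k ∈ H)
    (k : ℕ) :
    CoarselyBetween d (c + 4 * d 1 t) (axisPoint h t k) (axisPoint h t (k + 1))
      (axisPoint h t (k + 2)) := by
  set y := axisPoint h t k
  have hhh := hc _ (hmem k) _ (hmem (k + 1))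
  have hstep₁ : d y (axisPoint h t (k + 1)) ≤ d 1 (h k) + d 1 t := dist_axisPoint_succ_le hd k
  have hstep₂ : d (axisPoint h t (k + 1)) (axisPoint h t (k + 2)) ≤ d 1 (h (k + 1)) + d 1 t :=
    dist_axisPoint_succ_le hd (k + 1)
  have htail : d 1 (h (k + 1)) ≤ d 1 t + d (h k) (h k * t * h (k + 1)) := by
    rw [mul_assoc, hd.dist_self_mul, ← hd.dist_self_mul t (h (k + 1)), hd.dist_self_mul t,
      hd.dist_comm 1 t]
    have := hd.dist_triangle t 1 (t * h (k + 1))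
    rwa [hd.dist_self_mul] at this
  have hend : d 1 (h k * t * h (k + 1)) ≤ d y (axisPoint h t (k + 2)) + d 1 t := by
    rw [show axisPoint h t (k + 2) = y * (h k * t * h (k + 1) * t) by
      simp [axisPoint, y, mul_assoc], hd.dist_self_mul, ← hd.dist_self_mul _ t,
      hd.dist_comm (h k * t * h (k + 1))]
    exact hd.dist_triangle _ _ _
  simp only [CoarselyBetween] at hhh ⊢
  omega

theorem coarselyBetween_axisPoint (hd : IsLeftInvariantHyperbolic d δ) {c : ℕ}
    (hc : ∀ h ∈ H, ∀ h' ∈ H, CoarselyBetween d c 1 h (h * t * h')) (hmem : ∀ k, h k ∈ H)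
    (hlong : ∀ k, c + 10 * d 1 t + 2 * δ < d 1 (h k)) {i k m : ℕ} (hik : i ≤ k) (hkm : k ≤ m) :
    CoarselyBetween d (c + 4 * d 1 t + 2 * δ) (axisPoint h t i) (axisPoint h t k)
      (axisPoint h t m) := by
  refine hd.coarselyBetween_of_local (coarselyBetween_axisPoint_succ hd hc hmem) (fun k => ?_)
    hik hkm
  have := hlong k
  have := le_dist_axisPoint_succ (h := h) (t := t) hd k
  omega

/-- A sequence of syllables in `H` of period `3` whose lengths grow along each period, each
step and the first length being at least `L`. -/
structure IsGrowingPeriod (d : G → G → ℕ) (H : Subgroup G) (L : ℕ) (h : ℕ → G) : Prop where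
  mem : ∀ k, h k ∈ H
  periodic : Function.Periodic h 3
  le_dist_zero : L ≤ d 1 (h 0)
  dist_zero_add_le : d 1 (h 0) + L ≤ d 1 (h 1)
  dist_one_add_le : d 1 (h 1) + L ≤ d 1 (h 2)

namespace IsGrowingPeriod

variable {L : ℕ}

theorem mono {L' : ℕ} (hh : IsGrowingPeriod d H L' h) (hL : L ≤ L') :
    IsGrowingPeriod d H L h where
  mem := hh.mem
  periodic := hh.periodic
  le_dist_zero := hL.trans hh.le_dist_zero
  dist_zero_add_le := (Nat.add_le_add_left hL _).trans hh.dist_zero_add_le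
  dist_one_add_le := (Nat.add_le_add_left hL _).trans hh.dist_one_add_le

theorem le_dist (hh : IsGrowingPeriod d H L h) (k : ℕ) : L ≤ d 1 (h k) := by
  have := hh.le_dist_zero
  have := hh.dist_zero_add_le
  have := hh.dist_one_add_le
  rw [← hh.periodic.map_mod_nat k]
  have := Nat.mod_lt k three_pos
  interval_cases k % 3 <;> omega

theorem mod_three_eq_two (hh : IsGrowingPeriod d H L h) {k : ℕ}
    (hk : d 1 (h 2) < d 1 (h k) + L) : k % 3 = 2 := by
  have := hh.dist_zero_add_le
  have := hh.dist_one_add_le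
  rw [← hh.periodic.map_mod_nat k] at hk
  have := Nat.mod_lt k three_pos
  interval_cases k % 3 <;> omega

theorem coarselyBetween_axisPoint (hh : IsGrowingPeriod d H L h)
    (hd : IsLeftInvariantHyperbolic d δ) {c : ℕ}
    (hc : ∀ h ∈ H, ∀ h' ∈ H, CoarselyBetween d c 1 h (h * t * h'))
    (hL : c + 10 * d 1 t + 2 * δ < L) {i k m : ℕ} (hik : i ≤ k) (hkm : k ≤ m) :
    CoarselyBetween d (c + 4 * d 1 t + 2 * δ) (axisPoint h t i) (axisPoint h t k)
      (axisPoint h t m) :=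
  _root_.coarselyBetween_axisPoint hd hc hh.mem (fun k => hL.trans_le (hh.le_dist k)) hik hkm

theorem dist_axisPoint_lt_succ (hh : IsGrowingPeriod d H L h)
    (hd : IsLeftInvariantHyperbolic d δ) {c : ℕ}
    (hc : ∀ h ∈ H, ∀ h' ∈ H, CoarselyBetween d c 1 h (h * t * h'))
    (hL : c + 10 * d 1 t + 2 * δ < L) {r : ℕ} (hr : r + c + 5 * d 1 t + 2 * δ < L) (k : ℕ) :
    d 1 (axisPoint h t k) + r < d 1 (axisPoint h t (k + 1)) := by
  have hbetween : CoarselyBetween d _ 1 (axisPoint h t k) (axisPoint h t (k + 1)) :=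
    hh.coarselyBetween_axisPoint hd hc hL k.zero_le k.le_succ
  have := hh.le_dist k
  have := le_dist_axisPoint_succ (h := h) (t := t) hd k
  omega

end IsGrowingPeriod

end Axis

/-! ### The inverse does not occur along the axis -/

section NoInverse

theorem exists_interval_covering {s : ℕ → ℕ} {m r a b : ℕ} {P : ℕ → Prop} (h0 : s 0 = 0)
    (hgap : ∀ k, s k + 2 * r < s (k + 1)) (hab : a + 4 * r < b) (hbm : b ≤ s m)
    (hP : ∀ k x x', k < m → s k ≤ x → a ≤ x → x + r ≤ x' → x' ≤ s (k + 1) → x' ≤ b → P k)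
    (hPP : ∀ k, P k → ¬ P (k + 1)) :
    ∃ k < m, s k ≤ a + r ∧ b ≤ s (k + 1) + r ∧ P k := by
  classical
  have hex : ∃ j, a + r < s j := ⟨m, by omega⟩
  obtain ⟨k, hk⟩ : ∃ k, Nat.find hex = k + 1 := by
    refine Nat.exists_eq_succ_of_ne_zero fun h => ?_
    have := Nat.find_spec hex
    rw [h] at this
    omega
  have hak : a + r < s (k + 1) := hk ▸ Nat.find_spec hex
  have hka : s k ≤ a + r := not_lt.1 (Nat.find_min hex (hk ▸ k.lt_succ_self))
  have hkm : k + 1 ≤ m := hk ▸ Nat.find_min' hex (by omega)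
  have hgapk := hgap k
  have hPk : P k := hP k (max (s k) a) (max (s k) a + r) hkm (by omega) (by omega) le_rfl
    (by omega) (by omega)
  refine ⟨k, hkm, hka, ?_, hPk⟩
  by_contra! hb
  have hne : k + 1 ≠ m := by rintro rfl; omega
  have hgapk' := hgap (k + 1)
  exact hPP k hPk (hP (k + 1) (s (k + 1)) (s (k + 1) + r) (by omega) le_rfl (by omega) le_rfl
    (by omega) (by omega))

section Path

variable {α : Type*} {d : α → α → ℕ} {δ : ℕ} {x y p q u : α} {e b : ℕ}

theorem IsGeodesicHyperbolic.coarselyBetween_of_path (hd : IsGeodesicHyperbolic d δ)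
    (hpath : d y p + d p q + d q x ≤ d y x + e) (hu : CoarselyBetween d b p u q) :
    CoarselyBetween d (e + b) x u y := by
  have := hd.dist_triangle y p u
  have := hd.dist_triangle u q x
  refine hd.coarselyBetween_symm ?_
  simp only [CoarselyBetween] at hu ⊢
  omega

theorem IsGeodesicHyperbolic.coarselyBetween_of_path_tail {v : α} (hd : IsGeodesicHyperbolic d δ)
    (hpath : d y p + d p q + d q x ≤ d y x + e) (hu : CoarselyBetween d b p u q)
    (hv : CoarselyBetween d b u v q) : CoarselyBetween d (e + 2 * b) x v u := by
  have := hd.dist_triangle4 y p u x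
  have := hd.dist_triangle v q x
  refine hd.coarselyBetween_symm ?_
  simp only [CoarselyBetween] at hu hv ⊢
  omega

theorem IsGeodesicHyperbolic.dist_le_of_path (hd : IsGeodesicHyperbolic d δ)
    (hpath : d y p + d p q + d q x ≤ d y x + e) (hu : CoarselyBetween d b p u q)
    (hfar : e + b ≤ d p u) : d x u ≤ d x y := by
  have := hd.dist_triangle u q x
  have := hd.dist_comm x u
  have := hd.dist_comm x y
  simp only [CoarselyBetween] at hu
  omega

end Path

variable {G : Type*} [Group G] {d : G → G → ℕ} {δ : ℕ} {H : Subgroup G} {t : G}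

theorem IsHypEmbedded.exists_coset_eq_of_overlap (hH : IsHypEmbedded d H)
    (hd : IsLeftInvariantHyperbolic d δ) (e : ℕ) (t : G) :
    ∃ R, ∀ y u u', ∀ h ∈ H, ∀ h' ∈ H, CoarselyBetween d e 1 u y →
      CoarselyBetween d e 1 (u * h * t) y → CoarselyBetween d e 1 u' y →
      CoarselyBetween d e 1 (u' * h' * t) y → ∀ s s', d 1 u ≤ s → d 1 (u' * h' * t) ≤ s →
      s + R ≤ s' → s' ≤ d 1 (u * h * t) → s' ≤ d 1 u' → s' ≤ d 1 y → u⁻¹ * u' ∈ H := by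
  obtain ⟨r, hr⟩ := hH.exists_nearCoset_of_height hd e t
  obtain ⟨R, hR⟩ := hH.exists_coset_eq_of_nearCoset hd r
  refine ⟨R, fun y u u' h hh h' hh' hu hv hu' hv' s s' hus hvs hss hsv hsu hsy => ?_⟩
  obtain ⟨p, hp, hpy⟩ := hd.exists_between 1 y s (by omega)
  obtain ⟨p', hp', hpy'⟩ := hd.exists_between 1 y s' hsy
  have hpb : CoarselyBetween d e 1 p y := by omega
  have hpb' : CoarselyBetween d e 1 p' y := by omega
  have := hd.dist_triangle 1 p p'
  exact hR u u' p p' (hr y u h hh p hu hv hpb (by omega)) (hr y u h hh p' hu hv hpb' (by omega))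
    (hr y u' h' hh' p hu' hv' hpb (by omega)) (hr y u' h' hh' p' hu' hv' hpb' (by omega))
    (by omega)

theorem IsHypEmbedded.exists_covering_syllable (hH : IsHypEmbedded d H)
    (hd : IsLeftInvariantHyperbolic d δ) (ht : t ∉ H) (e : ℕ) :
    ∃ R, ∀ (h : ℕ → G) (m : ℕ), (∀ k, h k ∈ H) →
      (∀ k ≤ m, CoarselyBetween d e 1 (axisPoint h t k) (axisPoint h t m)) →
      (∀ k, d 1 (axisPoint h t k) + 2 * R < d 1 (axisPoint h t (k + 1))) →
      ∀ u, ∀ h' ∈ H, CoarselyBetween d e 1 u (axisPoint h t m) →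
      CoarselyBetween d e 1 (u * h' * t) (axisPoint h t m) → d 1 (u * h' * t) + 4 * R < d 1 u →
      d 1 u ≤ d 1 (axisPoint h t m) →
      ∃ k, d 1 (axisPoint h t k) ≤ d 1 (u * h' * t) + R ∧
        d 1 u ≤ d 1 (axisPoint h t (k + 1)) + R ∧ (axisPoint h t k)⁻¹ * u ∈ H := by
  obtain ⟨R, hR⟩ := hH.exists_coset_eq_of_overlap hd e t
  refine ⟨R, fun h m hmem hbetween hgap u h' hh' hu hv hlong hum => ?_⟩
  obtain ⟨k, -, hk⟩ := exists_interval_covering (s := fun k => d 1 (axisPoint h t k))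
    (P := fun k => (axisPoint h t k)⁻¹ * u ∈ H) (hd.dist_self 1) hgap hlong hum
    (fun k x x' hkm hkx hux hxx hxk hxu => hR _ _ u (h k) (hmem k) h' hh' (hbetween k hkm.le)
      (hbetween (k + 1) hkm) hu hv x x' hkx hux hxx hxk hxu (hxu.trans hum))
    (fun k hk hk' => inv_axisPoint_mul_succ_notMem hmem ht k
      (by simpa [mul_assoc] using H.mul_mem hk (H.inv_mem hk')))
  exact ⟨k, hk⟩

theorem IsGrowingPeriod.exists_translate_of_occursBetween {L c b : ℕ} {h : ℕ → G}
    (hh : IsGrowingPeriod d H L h) (hd : IsLeftInvariantHyperbolic d δ)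
    (hc : ∀ h ∈ H, ∀ h' ∈ H, CoarselyBetween d c 1 h (h * t * h'))
    (hb : b = c + 4 * d 1 t + 2 * δ) {e n : ℕ} (hL : e + 3 * b < L)
    (hocc : OccursBetween d (axisPoint h t 3) e (axisPoint h t 3 ^ n) 1) :
    ∃ g, ∀ a, 1 ≤ a → a < 3 →
      CoarselyBetween d (e + b) 1 (g * axisPoint h t a) (axisPoint h t (3 * n)) ∧
      CoarselyBetween d (e + b) 1 (g * axisPoint h t (a + 1)) (axisPoint h t (3 * n)) ∧
      d 1 (g * axisPoint h t a) ≤ d 1 (axisPoint h t (3 * n)) ∧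
      d 1 (g * axisPoint h t (a + 1)) + d (axisPoint h t a) (axisPoint h t (a + 1)) ≤
        d 1 (g * axisPoint h t a) + (e + 2 * b) := by
  obtain ⟨g, hg⟩ := hocc
  refine ⟨g, fun a ha ha3 => ?_⟩
  rw [← axisPoint_three_mul hh.periodic] at hg
  set Y := axisPoint h t (3 * n)
  set z := fun k => g * axisPoint h t k with hz
  have hzdist (i k) : d (z i) (z k) = d (axisPoint h t i) (axisPoint h t k) :=
    hd.dist_mul_left _ _ _
  have hzbetween {i k m : ℕ} (hik : i ≤ k) (hkm : k ≤ m) :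
      CoarselyBetween d b (z i) (z k) (z m) := by
    simpa only [CoarselyBetween, hzdist, hb] using
      hh.coarselyBetween_axisPoint hd hc (by omega) hik hkm
  have hpath : d Y (z 0) + d (z 0) (z 3) + d (z 3) 1 ≤ d Y 1 + e := by
    simpa [hz, axisPoint] using hg
  have hfar : e + b ≤ d (z 0) (z a) := by
    have := hh.dist_axisPoint_lt_succ (t := t) (r := e + b) hd hc (by omega) (by omega) (a - 1)
    rw [Nat.sub_add_cancel ha] at this
    rw [hzdist, axisPoint]
    omega
  refine ⟨hd.coarselyBetween_of_path hpath (hzbetween a.zero_le ha3.le),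
    hd.coarselyBetween_of_path hpath (hzbetween (Nat.zero_le _) ha3),
    hd.dist_le_of_path hpath (hzbetween a.zero_le ha3.le) hfar, ?_⟩
  rw [← hzdist, hd.dist_comm (z a)]
  exact hd.coarselyBetween_of_path_tail hpath (hzbetween a.zero_le ha3.le)
    (hzbetween a.le_succ ha3)

theorem IsHypEmbedded.exists_syllable_of_occursBetween (hH : IsHypEmbedded d H)
    (hd : IsLeftInvariantHyperbolic d δ) (ht : t ∉ H) {c : ℕ}
    (hc : ∀ h ∈ H, ∀ h' ∈ H, CoarselyBetween d c 1 h (h * t * h')) (e : ℕ) :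
    ∃ R L, ∀ h, IsGrowingPeriod d H L h →
      (∀ k, d 1 (axisPoint h t k) + 2 * R < d 1 (axisPoint h t (k + 1))) ∧
      ∀ n, OccursBetween d (axisPoint h t 3) e (axisPoint h t 3 ^ n) 1 →
        ∃ g, ∀ a, 1 ≤ a → a < 3 →
          d 1 (g * axisPoint h t (a + 1)) + 4 * R < d 1 (g * axisPoint h t a) ∧
          ∃ k, d 1 (axisPoint h t k) ≤ d 1 (g * axisPoint h t (a + 1)) + R ∧
            d 1 (g * axisPoint h t a) ≤ d 1 (axisPoint h t (k + 1)) + R ∧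
            (axisPoint h t k)⁻¹ * (g * axisPoint h t a) ∈ H ∧ d 1 (h a) < d 1 (h k) + L := by
  obtain ⟨b, hb⟩ : ∃ b, b = c + 4 * d 1 t + 2 * δ := ⟨_, rfl⟩
  obtain ⟨R, hR⟩ := hH.exists_covering_syllable hd ht (e + b)
  refine ⟨R, 6 * b + 2 * d 1 t + 4 * R + 2 * e + 1, fun h hh => ?_⟩
  have hgap (k) : d 1 (axisPoint h t k) + 2 * R < d 1 (axisPoint h t (k + 1)) :=
    hh.dist_axisPoint_lt_succ hd hc (by omega) (by omega) k
  refine ⟨hgap, fun n hocc => ?_⟩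
  obtain ⟨g, hg⟩ := hh.exists_translate_of_occursBetween hd hc hb (by omega) hocc
  refine ⟨g, fun a ha ha3 => ?_⟩
  obtain ⟨hon, hon', hle, hdesc⟩ := hg a ha ha3
  have := le_dist_axisPoint_succ (h := h) (t := t) hd a
  have := hh.le_dist a
  have hlong : d 1 (g * axisPoint h t (a + 1)) + 4 * R < d 1 (g * axisPoint h t a) := by omega
  have hsucc : g * axisPoint h t a * h a * t = g * axisPoint h t (a + 1) := by
    simp only [axisPoint, mul_assoc]
  have hbetween (k) (hk : k ≤ 3 * n) :
      CoarselyBetween d (e + b) 1 (axisPoint h t k) (axisPoint h t (3 * n)) :=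
    (hh.coarselyBetween_axisPoint hd hc (by omega) k.zero_le hk).trans
      (Nat.add_le_add_left (by omega) _)
  obtain ⟨k, hk, hk', hmem⟩ := hR h (3 * n) hh.mem hbetween hgap (g * axisPoint h t a) (h a)
    (hh.mem a) hon (hsucc ▸ hon') (hsucc ▸ hlong) hle
  rw [hsucc] at hk
  have := hd.dist_triangle 1 (axisPoint h t k) (axisPoint h t (k + 1))
  have := dist_axisPoint_succ_le (h := h) (t := t) hd k
  exact ⟨hlong, k, hk, hk', hmem, by omega⟩

theorem IsHypEmbedded.exists_not_occursBetween_pow_one (hH : IsHypEmbedded d H)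
    (hd : IsLeftInvariantHyperbolic d δ) (ht : t ∉ H) {c : ℕ}
    (hc : ∀ h ∈ H, ∀ h' ∈ H, CoarselyBetween d c 1 h (h * t * h')) (e : ℕ) :
    ∃ L, ∀ h, IsGrowingPeriod d H L h → ∀ n,
      ¬ OccursBetween d (axisPoint h t 3) e (axisPoint h t 3 ^ n) 1 := by
  obtain ⟨R, L, hL⟩ := hH.exists_syllable_of_occursBetween hd ht hc e
  refine ⟨L, fun h hh n hocc => ?_⟩
  obtain ⟨hgap, hsyl⟩ := hL h hh
  obtain ⟨g, hg⟩ := hsyl n hocc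
  obtain ⟨hdesc₂, k₂, hk₂, hk₂', hmem₂, hlen₂⟩ := hg 2 (by norm_num) (by norm_num)
  obtain ⟨hdesc₁, k₁, hk₁, hk₁', hmem₁, hlen₁⟩ := hg 1 le_rfl (by norm_num)
  simp only [Nat.reduceAdd] at hdesc₁ hk₁
  have hmono : StrictMono fun k => d 1 (axisPoint h t k) :=
    strictMono_nat_of_lt_succ fun k => (hgap k).trans_le' (by omega)
  have hne : k₁ ≠ k₂ := by
    rintro rfl
    refine inv_axisPoint_mul_succ_notMem hh.mem ht 1 ?_
    simpa [mul_assoc] using H.mul_mem (H.inv_mem hmem₁) hmem₂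
  have hle : k₁ < k₂ + 1 + 1 := hmono.lt_iff_lt.1 (by have := hgap (k₂ + 1); omega)
  have hge : k₂ < k₁ + 1 := hmono.lt_iff_lt.1 (by omega)
  have hk : k₁ = k₂ + 1 := by omega
  have hmod₂ : k₂ % 3 = 2 := hh.mod_three_eq_two hlen₂
  have hzero : h k₁ = h 0 := by
    rw [← hh.periodic.map_mod_nat k₁]
    congr 1
    omega
  have := hh.dist_zero_add_le
  rw [hzero] at hlen₁
  omega

theorem IsGrowingPeriod.mul_le_dist_pow {L c K : ℕ} {h : ℕ → G} (hh : IsGrowingPeriod d H L h)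
    (hd : IsLeftInvariantHyperbolic d δ)
    (hc : ∀ h ∈ H, ∀ h' ∈ H, CoarselyBetween d c 1 h (h * t * h'))
    (hL : c + 10 * d 1 t + 2 * δ < L)
    (hK : d 1 (axisPoint h t 3) = K + (c + 4 * d 1 t + 2 * δ)) (n : ℕ) :
    n * K ≤ d 1 (axisPoint h t 3 ^ n) := by
  induction n with
  | zero => simp
  | succ n ih =>
    have hbetween : CoarselyBetween d (c + 4 * d 1 t + 2 * δ) 1 (axisPoint h t (3 * n))
        (axisPoint h t (3 * (n + 1))) :=
      hh.coarselyBetween_axisPoint hd hc hL (Nat.zero_le _) (by omega)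
    rw [axisPoint_three_mul hh.periodic, axisPoint_three_mul hh.periodic, CoarselyBetween,
      pow_succ, hd.dist_self_mul, ← pow_succ] at hbetween
    rw [Nat.succ_mul]
    omega

theorem IsHypEmbedded.exists_isHomogeneousQM_axisPoint (hH : IsHypEmbedded d H)
    (hd : IsLeftInvariantHyperbolic d δ) (ht : t ∉ H) :
    ∃ e L, ∀ h, IsGrowingPeriod d H L h →
      (∀ k ≤ 3, CoarselyBetween d e 1 (axisPoint h t k) (axisPoint h t 3)) ∧
      ∃ q, IsHomogeneousQM q ∧ q (axisPoint h t 3) ≤ -1 ∧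
        ∀ Q : Subgroup G, (∀ x ∈ Q, ¬ OccursBetween d (axisPoint h t 3) e 1 x) →
          ∀ x ∈ Q, q x = 0 := by
  obtain ⟨c, hc⟩ := hH.exists_coarselyBetween_mul hd ht
  obtain ⟨b, hb⟩ : ∃ b, b = c + 4 * d 1 t + 2 * δ := ⟨_, rfl⟩
  obtain ⟨L, hL⟩ := hH.exists_not_occursBetween_pow_one hd ht hc (3 * (b + 1) + δ)
  refine ⟨3 * (b + 1) + δ, L + 10 * b + 4 * δ + 10, fun h hh => ?_⟩
  have hbetween (k) (hk : k ≤ 3) :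
      CoarselyBetween d b 1 (axisPoint h t k) (axisPoint h t 3) :=
    hb ▸ hh.coarselyBetween_axisPoint hd hc (by omega) k.zero_le hk
  have hw : 3 * (b + 1) + 2 * δ < d 1 (axisPoint h t 3) := by
    have := hbetween 1 (by norm_num)
    have : d 1 (h 0) ≤ d 1 (axisPoint h t 1) + d 1 t := le_dist_axisPoint_succ hd 0
    have := hh.le_dist_zero
    omega
  obtain ⟨K, hK⟩ := Nat.exists_eq_add_of_le' (show b + 1 ≤ d 1 (axisPoint h t 3) by omega)
  refine ⟨fun k hk => (hbetween k hk).trans (by omega),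
    hd.exists_isHomogeneousQM_of_not_occursBetween hK (by omega) (hL h (hh.mono (by omega)))
      fun n => ?_⟩
  exact hh.mul_le_dist_pow hd hc (by omega) (by omega) n

end NoInverse

/-! ### Conjugates and fellow-travelling cosets -/

theorem mem_conjSub {G : Type*} [Group G] {a x : G} {Q : Subgroup G} :
    x ∈ conjSub a Q ↔ a⁻¹ * x * a ∈ Q := by
  rw [conjSub, Subgroup.mem_map_equiv, MulAut.conj_symm_apply]

/-- Some conjugate of `Q` contains `H`. -/
def IsSubconjugate {G : Type*} [Group G] (H Q : Subgroup G) : Prop :=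
  ∃ a, H ≤ conjSub a Q

theorem IsSubconjugate.trans {G : Type*} [Group G] {H Q P : Subgroup G}
    (h : IsSubconjugate H Q) (h' : IsSubconjugate Q P) : IsSubconjugate H P := by
  obtain ⟨a, ha⟩ := h
  obtain ⟨b, hb⟩ := h'
  refine ⟨a * b, fun x hx => mem_conjSub.2 ?_⟩
  simpa [mul_assoc] using mem_conjSub.1 (hb (mem_conjSub.1 (ha hx)))

theorem exists_infinite_forall_isSubconjugate {G ι : Type*} [Group G] [Finite ι]
    {H : ι → Subgroup G} (hinf : ∃ j, (H j : Set G).Infinite) :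
    ∃ j, (H j : Set G).Infinite ∧
      ∀ i, IsSubconjugate (H j) (H i) → IsSubconjugate (H i) (H j) := by
  obtain ⟨j, hj, hmax⟩ := Set.Finite.exists_maximalFor
    (fun j => {i | IsSubconjugate (H i) (H j)}) {j | (H j : Set G).Infinite} (Set.toFinite _) hinf
  refine ⟨j, hj, fun i hij => ?_⟩
  obtain ⟨a, ha⟩ := hij
  have hi : (H i : Set G).Infinite := by
    refine fun hfin => hj ((hfin.image (MulAut.conj a)).subset fun x hx => ?_)
    exact ha hx
  exact hmax hi (fun k hk => IsSubconjugate.trans hk ⟨a, ha⟩)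
    (show IsSubconjugate (H i) (H i) from ⟨1, fun x hx => mem_conjSub.2 (by simpa using hx)⟩)

/-- B. H. Neumann's lemma, avoiding moreover a finite set. -/
theorem exists_notMem_leftCosets {K : Type*} [Group K] [Infinite K] {S : Set K} (hS : S.Finite)
    {F : Set (K × Subgroup K)} (hF : F.Finite) (hindex : ∀ p ∈ F, ¬ p.2.FiniteIndex) :
    ∃ x ∉ S, ∀ p ∈ F, p.1⁻¹ * x ∉ p.2 := by
  by_contra! hcover
  have hfin := (hS.image fun x => (x, (⊥ : Subgroup K))).union hF
  have hunion : ⋃ p ∈ hfin.toFinset, p.1 • (p.2 : Set K) = Set.univ := by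
    refine Set.eq_univ_of_forall fun x => ?_
    simp only [Set.mem_iUnion, Set.Finite.mem_toFinset, exists_prop,
      Set.mem_smul_set_iff_inv_smul_mem, smul_eq_mul, SetLike.mem_coe]
    by_cases hx : x ∈ S
    · exact ⟨(x, ⊥), Or.inl ⟨x, hx, rfl⟩, by simp⟩
    · obtain ⟨p, hp, hpx⟩ := hcover x hx
      exact ⟨p, Or.inr hp, hpx⟩
  obtain ⟨p, hp, hpindex⟩ := Subgroup.exists_finiteIndex_of_leftCoset_cover hunion
  rcases (Set.Finite.mem_toFinset hfin).1 hp with ⟨x, -, rfl⟩ | hpF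
  · have : (⊥ : Subgroup K).FiniteIndex := hpindex
    have : Finite K := Finite.of_equiv _ (QuotientGroup.quotientBot (G := K)).toEquiv
    exact not_finite K
  · exact hindex p hpF hpindex

section Commensurability

variable {G : Type*} [Group G] {d : G → G → ℕ} {δ : ℕ} {H Q : Subgroup G}

theorem IsHypEmbedded.exists_finite_cosets (hH : IsHypEmbedded d H) (hQ : IsHypEmbedded d Q)
    (hd : IsLeftInvariantHyperbolic d δ) (r : ℕ) :
    ∃ n, ∃ A : Set G, A.Finite ∧ ∀ h ∈ H, n ≤ d 1 h → ∀ a, NearCoset d Q r a 1 →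
      NearCoset d Q r a h → ∃ a' ∈ A, a'⁻¹ * a ∈ Q := by
  obtain ⟨κ, hκ⟩ := hH.quasiconvex
  obtain ⟨κ', hκ'⟩ := hQ.exists_nearCoset_of_coarselyBetween hd (4 * r)
  obtain ⟨R, hR⟩ := hQ.exists_coset_eq_of_nearCoset hd (r + κ' + κ)
  have hrep (k : G) : ∃ b, ∀ a,
      NearCoset d Q (r + κ' + κ) a 1 ∧ NearCoset d Q (r + κ' + κ) a k →
        NearCoset d Q (r + κ' + κ) b 1 ∧ NearCoset d Q (r + κ' + κ) b k := by
    by_cases hex : ∃ b, NearCoset d Q (r + κ' + κ) b 1 ∧ NearCoset d Q (r + κ' + κ) b k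
    · exact hex.imp fun b hb a _ => hb
    · exact ⟨1, fun a ha => (hex ⟨a, ha⟩).elim⟩
  choose f hf using hrep
  refine ⟨R + κ, f '' {k | k ∈ H ∧ d 1 k ≤ R + 2 * κ}, (hH.finite_ball _).image _, ?_⟩
  intro h hh hn a ha₁ hah
  obtain ⟨p, hp, hph⟩ := hd.exists_between 1 h (R + κ) hn
  obtain ⟨k, hk, hpk⟩ := hκ h hh p hph
  have hap : NearCoset d Q κ' a p := by
    obtain ⟨x, hx, h1x⟩ := ha₁
    obtain ⟨x', hx', hhx'⟩ := hah
    refine hκ' a (a * x) (a * x') p (by simpa using hx) (by simpa using hx') ?_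
    have := hd.dist_triangle (a * x) 1 p
    have := hd.dist_triangle p h (a * x')
    have := hd.dist_triangle4 1 (a * x) (a * x') h
    have := hd.dist_comm 1 (a * x)
    have := hd.dist_comm h (a * x')
    omega
  have hkp : d k p ≤ κ := by rwa [hd.dist_comm]
  have hak : NearCoset d Q (r + κ' + κ) a k := (hap.of_dist_le hd hkp).mono (by omega)
  have ha₁' : NearCoset d Q (r + κ' + κ) a 1 := ha₁.mono (by omega)
  obtain ⟨hf₁, hfk⟩ := hf k a ⟨ha₁', hak⟩
  have := hd.dist_triangle 1 k p
  have := hd.dist_triangle 1 p k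
  exact ⟨f k, ⟨k, ⟨hk, by omega⟩, rfl⟩, hR (f k) a 1 k hf₁ hfk ha₁' hak (by omega)⟩

theorem IsHypEmbedded.exists_finite_leftCosets (hH : IsHypEmbedded d H) (hQ : IsHypEmbedded d Q)
    (hd : IsLeftInvariantHyperbolic d δ) (r : ℕ) :
    ∃ n, ∃ F : Set (H × G), F.Finite ∧ ∀ x : H, n ≤ d 1 (x : G) → ∀ a, NearCoset d Q r a 1 →
      NearCoset d Q r a x → ∃ p ∈ F, p.1⁻¹ * x ∈ (conjSub p.2 Q).subgroupOf H := by
  obtain ⟨n, A, hA, hn⟩ := hH.exists_finite_cosets hQ hd r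
  have hrep (p : G × G) : ∃ y : H, ∀ x : H, p.1⁻¹ * x * p.2 ∈ Q → p.1⁻¹ * y * p.2 ∈ Q := by
    by_cases hex : ∃ y : H, p.1⁻¹ * y * p.2 ∈ Q
    · exact hex.imp fun y hy x _ => hy
    · exact ⟨1, fun x hx => (hex ⟨x, hx⟩).elim⟩
  choose y hy using hrep
  refine ⟨n, (fun p => (y p, p.2)) '' (A ×ˢ A), (hA.prod hA).image _, ?_⟩
  intro x hx a ha₁ hax
  obtain ⟨a₁, ha₁A, hmem₁⟩ := hn x x.2 hx a ha₁ hax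
  have hx' : n ≤ d 1 (x : G)⁻¹ := by
    rwa [hd.dist_comm, ← mul_one (x : G)⁻¹, hd.dist_inv_mul, mul_one]
  obtain ⟨a₂, ha₂A, hmem₂⟩ := hn (x : G)⁻¹ (H.inv_mem x.2) hx' ((x : G)⁻¹ * a)
    (by simpa using hax.mul_left hd (x : G)⁻¹) (by simpa using ha₁.mul_left hd (x : G)⁻¹)
  have hmem : a₁⁻¹ * x * a₂ ∈ Q := by
    simpa [mul_assoc] using Q.mul_mem hmem₁ (Q.inv_mem hmem₂)
  refine ⟨(y (a₁, a₂), a₂), ⟨(a₁, a₂), ⟨ha₁A, ha₂A⟩, rfl⟩, ?_⟩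
  rw [Subgroup.mem_subgroupOf, mem_conjSub]
  simpa [mul_assoc] using Q.mul_mem (Q.inv_mem (hy (a₁, a₂) x hmem)) hmem

theorem IsHypEmbedded.le_conjSub_of_nearCoset (hH : IsHypEmbedded d H) (hQ : IsHypEmbedded d Q)
    (hd : IsLeftInvariantHyperbolic d δ) (hinf : (H : Set G).Infinite) {a : G} {r : ℕ}
    (hnear : ∀ x ∈ H, NearCoset d Q r a x) : H ≤ conjSub a Q := by
  obtain ⟨R, hR⟩ := hQ.exists_coset_eq_of_nearCoset hd r
  obtain ⟨h, hh, hlong⟩ := hH.exists_lt_dist hinf R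
  intro x hx
  have hnear' (z) (hz : z ∈ H) : NearCoset d Q r (x * a) z := by
    simpa using (hnear _ (H.mul_mem (H.inv_mem hx) hz)).mul_left hd x
  simpa [mem_conjSub, mul_assoc] using hR a (x * a) 1 h (hnear _ H.one_mem) (hnear _ hh)
    (hnear' _ H.one_mem) (hnear' _ hh) hlong.le

theorem IsHypEmbedded.le_conjSub_of_finiteIndex (hH : IsHypEmbedded d H) (hQ : IsHypEmbedded d Q)
    (hd : IsLeftInvariantHyperbolic d δ) (hinf : (H : Set G).Infinite) {a : G}
    (hindex : ((conjSub a Q).subgroupOf H).FiniteIndex) : H ≤ conjSub a Q := by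
  set P := (conjSub a Q).subgroupOf H
  have : Finite (H ⧸ P) := Subgroup.finite_quotient_of_finiteIndex
  obtain ⟨r, hr⟩ := Finite.exists_le fun c : H ⧸ P => d ((c.out : H) : G)⁻¹ a
  refine hH.le_conjSub_of_nearCoset hQ hd hinf (r := r) fun x hx => ?_
  obtain ⟨s, hs⟩ := QuotientGroup.mk_out_eq_mul P (⟨x, hx⟩⁻¹ : H)
  have hdist := hr (QuotientGroup.mk (⟨x, hx⟩⁻¹ : H))
  rw [hs, ← hd.dist_mul_left ((s : H) : G)] at hdist
  refine ⟨_, mem_conjSub.1 (Subgroup.mem_subgroupOf.1 s.2), ?_⟩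
  simpa [mul_assoc] using hdist

theorem IsHypEmbedded.exists_forall_not_nearCoset {ι : Type*} [Finite ι] {Q : ι → Subgroup G}
    (hH : IsHypEmbedded d H) (hQ : ∀ i, IsHypEmbedded d (Q i))
    (hd : IsLeftInvariantHyperbolic d δ) (hinf : (H : Set G).Infinite) (r n : ℕ) :
    ∃ h ∈ H, n ≤ d 1 h ∧ ∀ i, ¬ IsSubconjugate H (Q i) →
      ∀ a, NearCoset d (Q i) r a 1 → ¬ NearCoset d (Q i) r a h := by
  choose m F hF hcover using fun i => hH.exists_finite_leftCosets (hQ i) hd r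
  obtain ⟨M, hM⟩ := Finite.exists_le m
  have : Infinite H := Set.infinite_coe_iff.2 hinf
  have hshort : {x : H | d 1 (x : G) ≤ n + M}.Finite :=
    Set.Finite.of_finite_image ((hH.finite_ball (n + M)).subset (by
      rintro _ ⟨x, hx, rfl⟩
      exact ⟨x.2, hx⟩)) Subtype.val_injective.injOn
  have hF' : (⋃ i ∈ {i | ¬ IsSubconjugate H (Q i)},
      (fun p : H × G => (p.1, (conjSub p.2 (Q i)).subgroupOf H)) '' F i).Finite :=
    (Set.toFinite _).biUnion fun i _ => (hF i).image _
  obtain ⟨x, hx, hxF⟩ := exists_notMem_leftCosets hshort hF' (by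
    simp only [Set.mem_iUnion]
    rintro _ ⟨i, hi, p, -, rfl⟩ hindex
    exact hi ⟨p.2, hH.le_conjSub_of_finiteIndex (hQ i) hd hinf hindex⟩)
  have hlong : n + M < d 1 (x : G) := not_le.1 hx
  refine ⟨x, x.2, by omega, fun i hi a ha₁ hax => ?_⟩
  obtain ⟨p, hp, hpx⟩ := hcover i x (by have := hM i; omega) a ha₁ hax
  exact hxF _ (Set.mem_biUnion hi ⟨p, hp, rfl⟩) hpx

theorem IsHypEmbedded.exists_conj_notMem (hH : IsHypEmbedded d H)
    (hd : IsLeftInvariantHyperbolic d δ) (hinf : (H : Set G).Infinite) (hne : H ≠ ⊤) :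
    ∃ g, ∃ h ∈ H, g * h * g⁻¹ ∉ H := by
  by_contra! hconj
  refine hne (eq_top_iff.2 fun g _ => ?_)
  obtain ⟨R, hR⟩ := hH.exists_coset_eq_of_nearCoset hd (d 1 g)
  obtain ⟨h, hh, hlong⟩ := hH.exists_lt_dist hinf R
  have hnear_g (z) (hz : z ∈ H) : NearCoset d H (d 1 g) g z := by
    refine ⟨g⁻¹ * z * g, by simpa using hconj g⁻¹ z hz, ?_⟩
    simp [mul_assoc, hd.dist_self_mul]
  have hnear_one (z) (hz : z ∈ H) : NearCoset d H (d 1 g) 1 z :=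
    ⟨z, hz, by simp [hd.dist_self]⟩
  simpa using hR 1 g 1 h (hnear_one _ H.one_mem) (hnear_one _ hh) (hnear_g _ H.one_mem)
    (hnear_g _ hh) hlong.le

end Commensurability

/-! ### Avoiding a finite family of subgroups -/

section Avoidance

variable {G : Type*} [Group G] {d : G → G → ℕ} {δ : ℕ} {H Q : Subgroup G} {t : G}

theorem IsHypEmbedded.exists_isGrowingPeriod (hH : IsHypEmbedded d H)
    (hinf : (H : Set G).Infinite) {h₀ : G} (hh₀ : h₀ ∈ H) {L : ℕ} (hL : L ≤ d 1 h₀) :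
    ∃ h, IsGrowingPeriod d H L h ∧ h 0 = h₀ := by
  obtain ⟨h₁, hh₁, hlen₁⟩ := hH.exists_lt_dist hinf (d 1 h₀ + L)
  obtain ⟨h₂, hh₂, hlen₂⟩ := hH.exists_lt_dist hinf (d 1 h₁ + L)
  refine ⟨fun k => if k % 3 = 0 then h₀ else if k % 3 = 1 then h₁ else h₂,
    ⟨fun k => ?_, fun k => by simp, by simpa, by simpa using hlen₁.le, by simpa using hlen₂.le⟩,
    by simp⟩
  split_ifs <;> assumption

theorem IsHypEmbedded.exists_nearCoset_of_occursBetween (hQ : IsHypEmbedded d Q)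
    (hd : IsLeftInvariantHyperbolic d δ) (e : ℕ) :
    ∃ r, ∀ x ∈ Q, ∀ w, OccursBetween d w e 1 x →
      ∃ g, ∀ p, CoarselyBetween d e 1 p w → NearCoset d Q r 1 (g * p) := by
  obtain ⟨r, hr⟩ := hQ.exists_nearCoset_of_coarselyBetween hd (e + e)
  refine ⟨r, fun x hx w ⟨g, hg⟩ => ⟨g, fun p hp => ?_⟩⟩
  refine hr 1 1 x (g * p) (by simp) (by simpa using hx) ?_
  rw [CoarselyBetween, ← hd.dist_mul_left g, ← hd.dist_mul_left g p, ← hd.dist_mul_left g 1,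
    mul_one] at hp
  have := hd.dist_triangle 1 g (g * p)
  have := hd.dist_triangle (g * p) (g * w) x
  simp only [CoarselyBetween]
  omega

theorem nearCoset_mul_axisPoint_mul (hd : IsLeftInvariantHyperbolic d δ) {h : ℕ → G} {a g : G}
    {r k : ℕ} (hk : NearCoset d Q r a (g * axisPoint h t (k + 1))) :
    NearCoset d Q (r + d 1 t) a (g * axisPoint h t k * h k) := by
  refine hk.of_dist_le hd ?_
  simp only [axisPoint, ← mul_assoc]
  rw [hd.dist_self_mul]

/-- Two consecutive syllables of the axis would make two cosets of `H` fellow-travel the coset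
of `H` containing a translate of `Q`, whereas these two cosets differ since `t ∉ H`. -/
theorem IsHypEmbedded.exists_not_nearCoset_axisPoint (hH : IsHypEmbedded d H)
    (hd : IsLeftInvariantHyperbolic d δ) (ht : t ∉ H) (hQ : IsSubconjugate Q H) (r : ℕ) :
    ∃ L, ∀ h, IsGrowingPeriod d H L h → ∀ g,
      ¬ ∀ k ≤ 3, NearCoset d Q r 1 (g * axisPoint h t k) := by
  obtain ⟨a, ha⟩ := hQ
  obtain ⟨R, hR⟩ := hH.exists_coset_eq_of_nearCoset hd (r + d 1 t + d 1 a)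
  refine ⟨R, fun h hh g hnear => ?_⟩
  have hnearH {p} (hp : NearCoset d Q (r + d 1 t) 1 p) :
      NearCoset d H (r + d 1 t + d 1 a) a p := by
    obtain ⟨x, hx, hpx⟩ := hp
    refine ⟨a⁻¹ * x * a, mem_conjSub.1 (ha hx), ?_⟩
    have := hd.dist_triangle p x (x * a)
    simp only [one_mul, mul_assoc, mul_inv_cancel_left, hd.dist_self_mul] at *
    omega
  have hself (p x : G) (hx : x ∈ H) : NearCoset d H (r + d 1 t + d 1 a) p (p * x) :=
    ⟨x, hx, by simp [hd.dist_self]⟩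
  have hcoset (k : ℕ) (hk : k + 1 ≤ 3) (hlen : R ≤ d 1 (h k)) :
      (g * axisPoint h t k)⁻¹ * a ∈ H := by
    refine hR _ a _ _ (by simpa using hself (g * axisPoint h t k) 1 H.one_mem)
      (hself _ (h k) (hh.mem k))
      (hnearH ((hnear k (by omega)).mono (by omega)))
      (hnearH (nearCoset_mul_axisPoint_mul hd (hnear (k + 1) hk))) ?_
    rwa [hd.dist_self_mul]
  have hlen₀ := hh.le_dist_zero
  have hlen₁ := hh.dist_zero_add_le
  refine inv_axisPoint_mul_succ_notMem hh.mem ht 0 ?_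
  simpa [mul_assoc] using H.mul_mem (hcoset 0 (by norm_num) hlen₀)
    (H.inv_mem (hcoset 1 (by norm_num) (by omega)))

theorem IsHypEmbedded.exists_isGrowingPeriod_forall_not_nearCoset {ι : Type*} [Finite ι]
    {Q : ι → Subgroup G} (hH : IsHypEmbedded d H) (hQ : ∀ i, IsHypEmbedded d (Q i))
    (hd : IsLeftInvariantHyperbolic d δ) (hinf : (H : Set G).Infinite) (ht : t ∉ H)
    (hmax : ∀ i, IsSubconjugate H (Q i) → IsSubconjugate (Q i) H) (r L : ℕ) :
    ∃ h, IsGrowingPeriod d H L h ∧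
      ∀ i g, ¬ ∀ k ≤ 3, NearCoset d (Q i) r 1 (g * axisPoint h t k) := by
  have hlong (i) : ∃ L, IsSubconjugate H (Q i) → ∀ h, IsGrowingPeriod d H L h → ∀ g,
      ¬ ∀ k ≤ 3, NearCoset d (Q i) r 1 (g * axisPoint h t k) := by
    by_cases hi : IsSubconjugate H (Q i)
    · exact (hH.exists_not_nearCoset_axisPoint hd ht (hmax i hi) r).imp fun _ h _ => h
    · exact ⟨0, fun h => absurd h hi⟩
  choose L' hL' using hlong
  obtain ⟨M, hM⟩ := Finite.exists_le L'
  obtain ⟨h₀, hh₀, hlen₀, havoid⟩ :=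
    hH.exists_forall_not_nearCoset hQ hd hinf (r + d 1 t) (L + M)
  obtain ⟨h, hh, rfl⟩ := hH.exists_isGrowingPeriod hinf hh₀ hlen₀
  refine ⟨h, hh.mono (by omega), fun i g hnear => ?_⟩
  by_cases hi : IsSubconjugate H (Q i)
  · exact hL' i hi h (hh.mono ((hM i).trans (by omega))) g hnear
  · refine havoid i hi g⁻¹ ?_ ?_
    · simpa [axisPoint] using ((hnear 0 (by omega)).mono (Nat.le_add_right r (d 1 t))).mul_left
        hd g⁻¹
    · simpa [axisPoint] using (nearCoset_mul_axisPoint_mul hd (hnear 1 (by omega))).mul_left hd g⁻¹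

theorem map_axisPoint_eq_zero {q : G → ℝ} (hq : ∀ x y, q (x * y) = q x + q y) {h : ℕ → G}
    (hqh : ∀ k, q (h k) = 0) (hqt : q t = 0) (k : ℕ) : q (axisPoint h t k) = 0 := by
  induction k with
  | zero => simpa [axisPoint] using hq 1 1
  | succ k ih => rw [axisPoint, hq, hq, ih, hqh, hqt, add_zero, add_zero]

theorem map_conj_eq {q : G → ℝ} (hq : ∀ x y, q (x * y) = q x + q y) (g x : G) :
    q (g * x * g⁻¹) = q x := by
  have hgx := hq (g * x * g⁻¹) g
  rw [inv_mul_cancel_right, hq] at hgx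
  linarith

theorem exists_isHomogeneousQM_of_isHypEmbedded {ι : Type*} [Finite ι] {H : ι → Subgroup G}
    (hd : IsLeftInvariantHyperbolic d δ) (hH : ∀ i, IsHypEmbedded d (H i)) (hne : ∀ i, H i ≠ ⊤)
    (hinf : ∃ j, (H j : Set G).Infinite) :
    ∃ q : G → ℝ, IsHomogeneousQM q ∧ (¬ ∀ x y : G, q (x * y) = q x + q y) ∧
      ∀ i, ∀ x ∈ H i, q x = 0 := by
  obtain ⟨j, hj, hmax⟩ := exists_infinite_forall_isSubconjugate hinf
  obtain ⟨g, s, hs, ht⟩ := (hH j).exists_conj_notMem hd hj (hne j)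
  obtain ⟨e, L, hqm⟩ := (hH j).exists_isHomogeneousQM_axisPoint hd ht
  choose r hr using fun i => (hH i).exists_nearCoset_of_occursBetween hd e
  obtain ⟨M, hM⟩ := Finite.exists_le r
  obtain ⟨h, hh, hfar⟩ :=
    (hH j).exists_isGrowingPeriod_forall_not_nearCoset hH hd hj ht hmax M L
  obtain ⟨hbetween, q, hq, hneg, hvanish⟩ := hqm h hh
  have hzero (i) : ∀ x ∈ H i, q x = 0 := by
    refine hvanish (H i) fun x hx hocc => ?_
    obtain ⟨g, hg⟩ := hr i x hx _ hocc
    exact hfar i g fun k hk => (hg _ (hbetween k hk)).mono (hM i)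
  refine ⟨q, hq, fun hhom => ?_, hzero⟩
  have hqt : q (g * s * g⁻¹) = 0 := (map_conj_eq hhom g s).trans (hzero j s hs)
  have := map_axisPoint_eq_zero hhom (fun k => hzero j (h k) (hh.mem k)) hqt 3
  linarith

end Avoidance

/-! ### Word metrics -/

section WordMetric

variable {G : Type*} [Group G] {S X : Set G} {g : G}

theorem wordLength_prod_le {l : List G} (hl : ∀ x ∈ l, x ∈ S ∨ x⁻¹ ∈ S) :
    wordLength S l.prod ≤ l.length :=
  Nat.sInf_le ⟨l, rfl, hl, rfl⟩

theorem exists_list_length_eq_wordLength (hg : g ∈ Subgroup.closure S) :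
    ∃ l : List G, l.length = wordLength S g ∧ (∀ x ∈ l, x ∈ S ∨ x⁻¹ ∈ S) ∧ l.prod = g := by
  rw [← Subgroup.mem_toSubmonoid, Subgroup.closure_toSubmonoid] at hg
  obtain ⟨l, hl, hlg⟩ := Submonoid.exists_list_of_mem_closure hg
  exact Nat.sInf_mem (s := {n | ∃ l : List G, l.length = n ∧ (∀ x ∈ l, x ∈ S ∨ x⁻¹ ∈ S) ∧
    l.prod = g}) ⟨_, l, rfl, hl, hlg⟩

@[simp]
theorem wordLength_one : wordLength S (1 : G) = 0 :=
  Nat.le_zero.1 (wordLength_prod_le (S := S) (l := []) (by simp))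

theorem wordLength_mul_le (hS : Subgroup.closure S = ⊤) (a b : G) :
    wordLength S (a * b) ≤ wordLength S a + wordLength S b := by
  obtain ⟨l, hla, hl, rfl⟩ := exists_list_length_eq_wordLength (hS ▸ Subgroup.mem_top a)
  obtain ⟨m, hmb, hm, rfl⟩ := exists_list_length_eq_wordLength (hS ▸ Subgroup.mem_top b)
  rw [← hla, ← hmb, ← List.prod_append, ← List.length_append]
  exact wordLength_prod_le fun x hx => (List.mem_append.1 hx).elim (hl x) (hm x)

theorem wordLength_inv_le (hS : Subgroup.closure S = ⊤) (a : G) :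
    wordLength S a⁻¹ ≤ wordLength S a := by
  obtain ⟨l, hla, hl, rfl⟩ := exists_list_length_eq_wordLength (hS ▸ Subgroup.mem_top a)
  have hinv : ∀ x ∈ (l.map (·⁻¹)).reverse, x ∈ S ∨ x⁻¹ ∈ S := by
    simp only [List.mem_reverse, List.mem_map]
    rintro _ ⟨y, hy, rfl⟩
    rw [inv_inv]
    exact (hl y hy).symm
  have := wordLength_prod_le hinv
  rwa [← List.prod_inv_reverse, List.length_reverse, List.length_map, hla] at this

/-- The word metric with values in `ℕ`. -/
noncomputable def natWordDist (S : Set G) (x y : G) : ℕ :=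
  wordLength S (x⁻¹ * y)

theorem cast_natWordDist (x y : G) : (natWordDist S x y : ℝ) = wordDist S x y :=
  rfl

theorem natWordDist_one_left (x : G) : natWordDist S 1 x = wordLength S x := by
  rw [natWordDist, inv_one, one_mul]

theorem natWordDist_mul_left (a x y : G) :
    natWordDist S (a * x) (a * y) = natWordDist S x y := by
  simp [natWordDist, mul_assoc]

theorem natWordDist_self_mul (x y : G) : natWordDist S x (x * y) = wordLength S y := by
  rw [natWordDist, inv_mul_cancel_left]

theorem natWordDist_comm (hS : Subgroup.closure S = ⊤) (x y : G) :
    natWordDist S x y = natWordDist S y x := by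
  have hle (x y : G) : natWordDist S x y ≤ natWordDist S y x := by
    simpa [natWordDist] using wordLength_inv_le hS (y⁻¹ * x)
  exact (hle x y).antisymm (hle y x)

theorem natWordDist_triangle (hS : Subgroup.closure S = ⊤) (x y z : G) :
    natWordDist S x z ≤ natWordDist S x y + natWordDist S y z := by
  simpa [natWordDist, mul_assoc] using wordLength_mul_le hS (x⁻¹ * y) (y⁻¹ * z)

theorem exists_natWordDist_between (hS : Subgroup.closure S = ⊤) (x y : G) (s : ℕ)
    (hs : s ≤ natWordDist S x y) : ∃ p, natWordDist S x p = s ∧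
      natWordDist S x p + natWordDist S p y = natWordDist S x y := by
  obtain ⟨l, hlen, hl, hprod⟩ := exists_list_length_eq_wordLength (hS ▸ Subgroup.mem_top (x⁻¹ * y))
  rw [← natWordDist] at hlen
  have htake : natWordDist S x (x * (l.take s).prod) ≤ s := by
    rw [natWordDist_self_mul]
    exact (wordLength_prod_le fun z hz => hl z (List.mem_of_mem_take hz)).trans
      (List.length_take_le s l)
  have hdrop : natWordDist S (x * (l.take s).prod) y ≤ natWordDist S x y - s := by
    have hy : y = x * (l.take s).prod * (l.drop s).prod := by
      rw [mul_assoc, List.prod_take_mul_prod_drop, hprod, mul_inv_cancel_left]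
    conv_lhs => rw [hy, natWordDist_self_mul]
    rw [← hlen, ← List.length_drop]
    exact wordLength_prod_le fun z hz => hl z (List.mem_of_mem_drop hz)
  have := natWordDist_triangle hS x (x * (l.take s).prod) y
  exact ⟨x * (l.take s).prod, by omega, by omega⟩

/-- In terms of distances the hyperbolicity inequality for Gromov products compares two sums of
opposite sides and is doubled, whence the constant `2 * δ`. -/
theorem isLeftInvariantHyperbolic_natWordDist (hX : Subgroup.closure X = ⊤)
    (hhyp : IsHyperbolicDist (wordDist X)) :
    ∃ δ, IsLeftInvariantHyperbolic (natWordDist X) δ := by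
  obtain ⟨δ, -, hδ⟩ := hhyp
  refine ⟨⌈2 * δ⌉₊, ⟨fun x => by simp [natWordDist], natWordDist_comm hX,
    natWordDist_triangle hX, exists_natWordDist_between hX, fun x y z w => ?_⟩,
    natWordDist_mul_left⟩
  have hle : 2 * δ ≤ ⌈2 * δ⌉₊ := Nat.le_ceil _
  have hprod := sub_le_iff_le_add.1 (hδ w x y z)
  simp only [gromovProd, ← cast_natWordDist] at hprod
  rw [natWordDist_comm hX z w, natWordDist_comm hX y w, natWordDist_comm hX x w]
  rify
  rcases min_le_iff.1 hprod with h | h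
  · left
    linarith
  · right
    linarith

theorem list_prod_mem_of_subset {H : Subgroup G} (hS : S ⊆ H) {l : List G}
    (hl : ∀ x ∈ l, x ∈ S ∨ x⁻¹ ∈ S) : l.prod ∈ H :=
  H.list_prod_mem fun x hx => (hl x hx).elim (hS ·) fun h => H.inv_mem_iff.1 (hS h)

theorem exists_path_of_mem_closure {H : Subgroup G} {M : ℕ} (hSH : S ⊆ H)
    (hM : ∀ x ∈ S, wordLength X x ≤ M) (hX : Subgroup.closure X = ⊤) {u v : G} (hu : u ∈ H)
    (huv : u⁻¹ * v ∈ Subgroup.closure S) :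
    ∃ γ : ℕ → G, γ 0 = u ∧ γ (natWordDist S u v) = v ∧ (∀ i, γ i ∈ H) ∧
      ∀ i < natWordDist S u v, natWordDist X (γ i) (γ (i + 1)) ≤ M := by
  obtain ⟨l, hlen, hl, hprod⟩ := exists_list_length_eq_wordLength huv
  rw [← natWordDist] at hlen
  refine ⟨fun i => u * (l.take i).prod, by simp, by simp [← hlen, hprod], fun i =>
    H.mul_mem hu (list_prod_mem_of_subset hSH fun x hx => hl x (List.mem_of_mem_take hx)),
    fun i hi => ?_⟩
  rw [← hlen] at hi
  simp only [List.prod_take_succ _ _ hi]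
  rw [← mul_assoc, natWordDist_self_mul]
  rcases hl _ (List.getElem_mem hi) with hmem | hmem
  · exact hM _ hmem
  · simpa using (wordLength_inv_le hX _).trans (hM _ hmem)

theorem finite_setOf_wordLength_le (hS : S.Finite) (n : ℕ) :
    {g ∈ Subgroup.closure S | wordLength S g ≤ n}.Finite := by
  have : Finite ↥(S ∪ S⁻¹) := (hS.union hS.inv).to_subtype
  refine ((List.finite_length_le ↥(S ∪ S⁻¹) n).image
    fun l => (l.map Subtype.val).prod).subset ?_
  rintro g ⟨hg, hgn⟩
  obtain ⟨l, hlen, hl, rfl⟩ := exists_list_length_eq_wordLength hg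
  lift l to List ↥(S ∪ S⁻¹) using hl
  exact ⟨l, by simpa using hlen.trans_le hgn, rfl⟩

theorem IsHypEmbFamily.separated {ι : Type*} {Q : ι → Subgroup G} (hQ : IsHypEmbFamily X Q)
    (i : ι) (r : ℕ) : ∃ R, ∀ g a b a' b', a ∈ Q i → b ∈ Q i → a' ∈ Q i → b' ∈ Q i →
      natWordDist X a (g * a') ≤ r → natWordDist X b (g * b') ≤ r → R ≤ natWordDist X a b →
      g ∈ Q i := by
  obtain ⟨R, hR⟩ := hQ.1 (r + 1) (by positivity)
  refine ⟨⌈R⌉₊, fun g a b a' b' ha hb ha' hb' hra hrb hRab => ?_⟩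
  have hnbhd {x x' : G} (hx' : x' ∈ Q i) (hr : natWordDist X x (g * x') ≤ r) :
      x ∈ nbhd X (r + 1) (g • (Q i : Set G)) := by
    refine ⟨g * x', ⟨x', hx', rfl⟩, ?_⟩
    rw [← cast_natWordDist]
    exact_mod_cast hr.trans (Nat.le_succ r)
  refine (hR g i i ⟨a, ⟨ha, hnbhd ha' hra⟩, b, ⟨hb, hnbhd hb' hrb⟩, ?_⟩).2
  rw [← cast_natWordDist]
  exact Nat.ceil_le.1 hRab

theorem IsHypEmbFamily.exists_generators {ι : Type*} {Q : ι → Subgroup G}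
    (hQ : IsHypEmbFamily X Q) (i : ι) : ∃ (Y : Set G) (A B : ℕ), Y.Finite ∧
      Subgroup.closure Y = Q i ∧ ∀ h ∈ Q i, wordLength Y h ≤ A * wordLength X h + B := by
  obtain ⟨-, Y, hY, μ, c, -, -, hqi⟩ := hQ
  refine ⟨Y i, ⌈μ⌉₊, ⌈c⌉₊, (hY i).1, (hY i).2.2, fun h hh => ?_⟩
  have hle : (wordLength (Y i) h : ℝ) ≤ ⌈μ⌉₊ * wordLength X h + ⌈c⌉₊ := by
    refine (hqi i h hh).trans ?_
    gcongr <;> exact Nat.le_ceil _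
  exact_mod_cast hle

theorem IsHypEmbFamily.isHypEmbedded {δ : ℕ} {ι : Type*} {Q : ι → Subgroup G}
    (hX : Subgroup.closure X = ⊤) (hd : IsLeftInvariantHyperbolic (natWordDist X) δ)
    (hQ : IsHypEmbFamily X Q) (i : ι) : IsHypEmbedded (natWordDist X) (Q i) := by
  obtain ⟨Y, A, B, hYfin, hYcl, hqi⟩ := hQ.exists_generators i
  have hYQ : Y ⊆ Q i := hYcl ▸ Subgroup.subset_closure
  refine ⟨?_, hQ.separated i, fun n => ?_⟩
  · obtain ⟨M, hM⟩ := (hYfin.image (wordLength X)).bddAbove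
    obtain ⟨κ, hκ⟩ := hd.exists_geodesic_near_of_paths (S := Q i) (A := A) (B := B) (M := M) (by
      intro u hu v hv
      have huv : u⁻¹ * v ∈ Q i := (Q i).mul_mem ((Q i).inv_mem hu) hv
      obtain ⟨γ, hγ⟩ := exists_path_of_mem_closure hYQ (fun x hx => hM ⟨x, hx, rfl⟩) hX hu
        (hYcl.symm ▸ huv)
      exact ⟨natWordDist Y u v, γ, hqi _ huv, hγ⟩)
    exact ⟨κ, hκ 1 (Q i).one_mem⟩
  · refine (finite_setOf_wordLength_le hYfin (A * n + B)).subset ?_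
    rintro h ⟨hh, hn⟩
    rw [natWordDist_one_left] at hn
    exact ⟨hYcl.symm ▸ hh, (hqi h hh).trans (by gcongr)⟩

end WordMetric

theorem exists_quasimorphism_vanishing_on_hyp_emb_general {G : Type*} [Group G] (X : Set G)
    (hXgen : Subgroup.closure X = ⊤) (hhyp : IsHyperbolicDist (wordDist X))
    {ι : Type*} [Finite ι] (H : ι → Subgroup G)
    (he : ∀ i, IsHypEmbFamily X (fun _ : Fin 1 => H i))
    (hproper : ∀ i, H i ≠ ⊤)
    (hsome_inf : ∃ j, (H j : Set G).Infinite) :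
    ∃ q : G → ℝ, IsHomogeneousQM q ∧ (¬ ∀ x y : G, q (x * y) = q x + q y) ∧
      ∀ i, ∀ x ∈ H i, q x = 0 := by
  obtain ⟨δ, hd⟩ := isLeftInvariantHyperbolic_natWordDist hXgen hhyp
  exact exists_isHomogeneousQM_of_isHypEmbedded hd (fun i => (he i).isHypEmbedded hXgen hd 0)
    hproper hsome_inf

/-- **Non-injectivity of the restriction on exact bounded cohomology.** There is a
homogeneous quasimorphism on `G` which is not a homomorphism and vanishes on each `Hᵢ`. -/
theorem exists_quasimorphism_vanishing_on_hyp_emb {G : Type*} [Group G] (X : Set G)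
    (hXgen : Subgroup.closure X = ⊤) (hhyp : IsHyperbolicDist (wordDist X))
    (l : ℕ) (H : Fin l → Subgroup G)
    (he : ∀ i, IsHypEmbFamily X (fun _ : Fin 1 => H i))
    (hinf_index : ∀ i, (H i).index = 0)
    (hsome_inf : ∃ j, ((H j : Set G)).Infinite)
    (E : Subgroup G) (hEnormal : E.Normal) (hEfin : (E : Set G).Finite)
    (hEmax : ∀ N : Subgroup G, N.Normal → (N : Set G).Finite → N ≤ E) :
    ∃ q : G → ℝ, IsHomogeneousQM q ∧ (¬ ∀ x y : G, q (x * y) = q x + q y) ∧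
      ∀ i : Fin l, ∀ x ∈ H i, q x = 0 := by
  exact exists_quasimorphism_vanishing_on_hyp_emb_general X hXgen hhyp H he
    (fun i htop => by simpa [htop] using hinf_index i) hsome_inf
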